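/- arXiv:2003.07204 — 2 statements merged into one kernel-verified Lean document; each statement's English description precedes it below -/
import Mathlib

section
/- For any negative discriminant Δ (Δ ≡ 0,1 mod 4) with |Δ| ≥ 10^14, the sum of divisors function satisfies σ₁(f̃)/f̃ ≤ 1.842·log log(|Δ|^{1/2}), where f̃ is the modified conductor of Δ. -/
/-- `D` is a fundamental discriminant. -/
def IsFundDisc (D : ℤ) : Prop :=
  (D % 4 = 1 ∧ Squarefree D) ∨
    (∃ m : ℤ, D = 4 * m ∧ (m % 4 = 2 ∨ m % 4 = 3) ∧ Squarefree m)

/-!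
Since `f̃ ≤ √|Δ|`, it suffices that `log (σ₁(n) / n) ≤ log (1.842 log L)` whenever `log n ≤ L` and
`L ≥ 16`. Maximising `log (σ₁(n) / n) - ε log n` prime by prime bounds `log (σ₁(n) / n)` by an
affine function of `log n`; replacing the local factors at the primes `p ≤ M` by `(1 - 1/p)⁻¹`, its
coefficients come from the Mertens product up to `M` and from `θ(M)`. As `log (1.842 log L)` is
concave, an affine majorant has to be compared with it only at the two ends of an interval, so that
a few majorants cover all `L ≤ 2 ^ 15`.

For larger `L` take `M = ⌊L⌋`. Partial summation relates the growth of the Mertens product to the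
integral of `ψ(t) / t²` over `1 ≤ t ≤ M`, and Chebyshev's method bounds that integral by
`log M - c`. This makes a suitable correction of the difference to be bounded nonincreasing in `M`,
which leaves one numerical check at `M = 2 ^ 15`.
-/

open ArithmeticFunction hiding log
open Finset Real
open scoped ArithmeticFunction.sigma Chebyshev

/-- The logarithm of the abundancy index `σ₁(n) / n`. -/
noncomputable def logAbundancy (n : ℕ) : ℝ :=
  log (σ 1 n / n)

section LocalMajorants

lemma logAbundancy_one : logAbundancy 1 = 0 := by
  simp [logAbundancy]

lemma logAbundancy_eq_sub {n : ℕ} (hn : n ≠ 0) :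
    logAbundancy n = log (σ 1 n) - log n :=
  log_div (mod_cast (sigma_pos 1 n hn).ne') (mod_cast hn)

lemma log_eq_sum_primeFactors {n : ℕ} (hn : n ≠ 0) :
    log n = ∑ p ∈ n.primeFactors, n.factorization p * log p := by
  conv_lhs => rw [← Nat.prod_factorization_pow_eq_self hn, Nat.cast_finsuppProd]
  rw [Finsupp.prod, log_prod fun p hp => by
    simp [(Nat.prime_of_mem_primeFactors hp).ne_zero]]
  simp

lemma logAbundancy_eq_sum_primeFactors {n : ℕ} (hn : n ≠ 0) :
    logAbundancy n = ∑ p ∈ n.primeFactors, logAbundancy (p ^ n.factorization p) := by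
  have hprime {p : ℕ} (hp : p ∈ n.primeFactors) : p ^ n.factorization p ≠ 0 :=
    pow_ne_zero _ (Nat.prime_of_mem_primeFactors hp).ne_zero
  rw [logAbundancy_eq_sub hn, sum_congr rfl fun p hp => logAbundancy_eq_sub (hprime hp),
    sum_sub_distrib, isMultiplicative_sigma.multiplicative_factorization _ hn, Finsupp.prod,
    Nat.cast_prod, log_prod fun p hp => mod_cast (sigma_pos 1 _ (hprime hp)).ne',
    log_eq_sum_primeFactors hn]
  simp

theorem logAbundancy_sub_le_sum {ε : ℝ} {s : Finset ℕ} {c : ℕ → ℝ} {n : ℕ} (hn : n ≠ 0)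
    (hin : ∀ p ∈ s, ∀ b : ℕ, logAbundancy (p ^ b) - b * (ε * log p) ≤ c p)
    (hout : ∀ p : ℕ, p.Prime → p ∉ s → ∀ b : ℕ, logAbundancy (p ^ b) ≤ b * (ε * log p)) :
    logAbundancy n - ε * log n ≤ ∑ p ∈ s, c p := by
  have hc {p : ℕ} (hp : p ∈ s) : 0 ≤ c p := by
    simpa [logAbundancy_one] using hin p hp 0
  calc logAbundancy n - ε * log n
      = ∑ p ∈ n.primeFactors,
          (logAbundancy (p ^ n.factorization p) - n.factorization p * (ε * log p)) := by
        rw [logAbundancy_eq_sum_primeFactors hn, log_eq_sum_primeFactors hn, mul_sum,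
          sum_sub_distrib]
        simp only [mul_left_comm]
    _ ≤ ∑ p ∈ n.primeFactors, if p ∈ s then c p else 0 := by
        refine sum_le_sum fun p hp => ?_
        split_ifs with hps
        · exact hin p hps _
        · exact sub_nonpos.mpr (hout p (Nat.prime_of_mem_primeFactors hp) hps _)
    _ = ∑ p ∈ n.primeFactors ∩ s, c p := by rw [sum_ite_mem]
    _ ≤ ∑ p ∈ s, c p :=
        sum_le_sum_of_subset_of_nonneg inter_subset_right fun p hp _ => hc hp

variable {p : ℕ}

lemma sigma_one_prime_pow_succ (hp : p.Prime) (b : ℕ) :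
    σ 1 (p ^ (b + 1)) = p * σ 1 (p ^ b) + 1 := by
  rw [sigma_one_apply_prime_pow hp, sigma_one_apply_prime_pow hp, geom_sum_succ]

lemma one_le_sigma_one_prime_pow (hp : p.Prime) (b : ℕ) : (1 : ℝ) ≤ σ 1 (p ^ b) :=
  mod_cast sigma_pos 1 _ (pow_ne_zero b hp.ne_zero)

lemma logAbundancy_prime_pow_succ (hp : p.Prime) (b : ℕ) :
    logAbundancy (p ^ (b + 1)) = logAbundancy (p ^ b) + log (1 + 1 / (p * σ 1 (p ^ b))) := by
  have hσ : (0 : ℝ) < σ 1 (p ^ b) := one_pos.trans_le (one_le_sigma_one_prime_pow hp b)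
  have hp0 : (0 : ℝ) < p := mod_cast hp.pos
  rw [logAbundancy, logAbundancy, sigma_one_prime_pow_succ hp]
  push_cast
  set s : ℝ := ((σ 1 (p ^ b) : ℕ) : ℝ)
  rw [← log_mul (by positivity) (by positivity), pow_succ']
  congr 1
  field_simp

lemma logAbundancy_prime_pow_le_div (hp : p.Prime) (b : ℕ) : logAbundancy (p ^ b) ≤ b / p := by
  have hp0 : (0 : ℝ) < p := mod_cast hp.pos
  induction b with
  | zero => simp [logAbundancy_one]
  | succ b ih =>
    have hσ := one_le_sigma_one_prime_pow hp b
    have hstep : log (1 + 1 / (p * σ 1 (p ^ b))) ≤ 1 / p :=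
      calc log (1 + 1 / (p * σ 1 (p ^ b))) ≤ 1 / (p * σ 1 (p ^ b)) :=
            (log_le_sub_one_of_pos (by positivity)).trans_eq (by ring)
        _ ≤ 1 / p := one_div_le_one_div_of_le hp0 (le_mul_of_one_le_right hp0.le hσ)
    rw [logAbundancy_prime_pow_succ hp, Nat.cast_succ, add_div]
    exact add_le_add ih hstep

lemma logAbundancy_prime_pow_le_mul_log {ε : ℝ} (hp : p.Prime) (hε : 1 ≤ ε * (p * log p)) (b : ℕ) :
    logAbundancy (p ^ b) ≤ b * (ε * log p) := by
  have hp0 : (0 : ℝ) < p := mod_cast hp.pos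
  have h : 1 / p ≤ ε * log p := by
    rw [div_le_iff₀ hp0]
    linarith
  calc logAbundancy (p ^ b) ≤ b * (1 / p) := by
        simpa only [mul_one_div] using logAbundancy_prime_pow_le_div hp b
    _ ≤ b * (ε * log p) := by gcongr

lemma logAbundancy_prime_pow_le_neg_log (hp : p.Prime) (b : ℕ) :
    logAbundancy (p ^ b) ≤ -log (1 - 1 / p) := by
  have hp1 : (1 : ℝ) < p := mod_cast hp.one_lt
  have hgeom : (σ 1 (p ^ b) : ℝ) * (p - 1) = p ^ (b + 1) - 1 := by
    rw [sigma_one_apply_prime_pow hp]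
    push_cast
    exact geom_sum_mul _ _
  have hσ : (0 : ℝ) < σ 1 (p ^ b) := one_pos.trans_le (one_le_sigma_one_prime_pow hp b)
  rw [logAbundancy, ← log_inv]
  refine log_le_log (div_pos hσ (mod_cast pow_pos hp.pos b)) ?_
  rw [one_sub_div (by positivity), inv_div, Nat.cast_pow,
    div_le_div_iff₀ (by positivity) (by linarith), hgeom]
  rw [pow_succ']
  linarith

lemma one_div_le_neg_log_one_sub {y : ℝ} (hy : 1 < y) : 1 / y ≤ -log (1 - 1 / y) := by
  have h : 1 / y < 1 := (div_lt_one (by linarith)).mpr hy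
  linarith [log_le_sub_one_of_pos (sub_pos.mpr h)]

lemma logAbundancy_prime_pow_sub_le {ε : ℝ} (hp : p.Prime) (hε₀ : 0 ≤ ε)
    (hε : ε * (p * log p) ≤ 1) (b : ℕ) :
    logAbundancy (p ^ b) - b * (ε * log p) ≤ -log (1 - 1 / p) - ε * log p := by
  have hp1 : (1 : ℝ) < p := mod_cast hp.one_lt
  have hlogp : 0 < log p := log_pos hp1
  rcases b.eq_zero_or_pos with rfl | hb
  · have hsmall : ε * log p ≤ 1 / p := by
      rw [le_div_iff₀ (by positivity)]
      linarith
    simpa [logAbundancy_one] using hsmall.trans (one_div_le_neg_log_one_sub hp1)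
  · have hb1 : (1 : ℝ) ≤ b := mod_cast hb
    have := le_mul_of_one_le_left (mul_nonneg hε₀ hlogp.le) hb1
    linarith [logAbundancy_prime_pow_le_neg_log hp b]

lemma neg_log_one_sub_le_one_div {y : ℝ} (hy : 1 < y) : -log (1 - 1 / y) ≤ 1 / (y - 1) := by
  have hinv : (1 - 1 / y)⁻¹ = 1 + 1 / (y - 1) := by
    have : y - 1 ≠ 0 := by linarith
    rw [one_sub_div (by positivity), inv_div]
    field_simp
    ring
  rw [← log_inv, hinv]
  linarith [log_le_sub_one_of_pos (show 0 < 1 + 1 / (y - 1) by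
    have := sub_pos.mpr hy; positivity)]

end LocalMajorants

section EulerProductMajorant

/-- The logarithm of the Mertens product `∏ (1 - 1/p)⁻¹` over the primes `p ≤ x`. -/
noncomputable def logMertensProd (x : ℕ) : ℝ :=
  ∑ p ∈ Nat.primesLE x, -log (1 - 1 / p)

/-- Every prime power contributes at most its Euler factor; the slope `1 / (x log x)` is the one
for which the exponent `1` stops being profitable at the primes just above `x`. -/
theorem logAbundancy_le_logMertensProd {n x : ℕ} (hn : n ≠ 0) (hx : 2 ≤ x) :
    logAbundancy n ≤ logMertensProd x + (log n - θ x) / (x * log x) := by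
  have hx1 : (1 : ℝ) < x := by exact_mod_cast hx
  have hlogx : 0 < log x := log_pos hx1
  set ε : ℝ := 1 / (x * log x)
  have hεx : ε * (x * log x) = 1 := one_div_mul_cancel (by positivity)
  have hε : 0 < ε := by positivity
  have hmain : logAbundancy n - ε * log n ≤
      ∑ p ∈ Nat.primesLE x, (-log (1 - 1 / p) - ε * log p) := by
    refine logAbundancy_sub_le_sum hn ?_ ?_
    · intro p hp b
      obtain ⟨hpx, hp⟩ := Nat.mem_primesLE.mp hp
      have : (0 : ℝ) < p := mod_cast hp.pos
      refine logAbundancy_prime_pow_sub_le hp hε.le ?_ b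
      rw [← hεx]
      gcongr
    · intro p hp hpx b
      have hxp : x ≤ p := by
        by_contra! h
        exact hpx (Nat.mem_primesLE.mpr ⟨h.le, hp⟩)
      refine logAbundancy_prime_pow_le_mul_log hp ?_ b
      rw [← hεx]
      gcongr
  rw [sum_sub_distrib, ← mul_sum, ← Chebyshev.theta_eq_sum_primesLE_log] at hmain
  rw [logMertensProd, sub_div, div_eq_mul_one_div (log _), div_eq_mul_one_div (θ _)]
  linarith

end EulerProductMajorant

section ColossallyAbundantMajorant

/-- The exponent `e` of `p` in a colossally abundant number of parameter `1 / k`: among the powers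
`p ^ b`, the quantity `log (σ₁(p ^ b) / p ^ b) - (b / k) log p` stops increasing at `b = e`. Both
conditions are cleared of logarithms and denominators, with `∑ i ∈ range (b + 1), p ^ i` for
`σ₁(p ^ b)`, so as to be decidable by computation. -/
def IsColossallyAbundantExponent (k p e : ℕ) : Prop :=
  (∀ j < e, p * (p * ∑ i ∈ range (j + 1), p ^ i) ^ k ≤ (∑ i ∈ range (j + 2), p ^ i) ^ k) ∧
    (∑ i ∈ range (e + 2), p ^ i) ^ k ≤ p * (p * ∑ i ∈ range (e + 1), p ^ i) ^ k

instance (k p e : ℕ) : Decidable (IsColossallyAbundantExponent k p e) :=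
  inferInstanceAs (Decidable (_ ∧ _))

variable {k p e : ℕ}

lemma logAbundancy_prime_pow_succ_le_succ (hp : p.Prime) {i j : ℕ} (hij : i ≤ j) :
    logAbundancy (p ^ (j + 1)) - logAbundancy (p ^ j) ≤
      logAbundancy (p ^ (i + 1)) - logAbundancy (p ^ i) := by
  have hp0 : (0 : ℝ) < p := mod_cast hp.pos
  have hi := one_le_sigma_one_prime_pow hp i
  have hσ : (σ 1 (p ^ i) : ℝ) ≤ σ 1 (p ^ j) := by
    rw [sigma_one_apply_prime_pow hp, sigma_one_apply_prime_pow hp]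
    exact_mod_cast sum_le_sum_of_subset (range_mono (by lia))
  rw [logAbundancy_prime_pow_succ hp, logAbundancy_prime_pow_succ hp, add_sub_cancel_left,
    add_sub_cancel_left]
  have : (0 : ℝ) < p * σ 1 (p ^ i) := mul_pos hp0 (by linarith)
  have : (0 : ℝ) < p * σ 1 (p ^ j) := mul_pos hp0 (by linarith)
  gcongr

lemma mul_logAbundancy_prime_pow_succ_sub (hp : p.Prime) (j : ℕ) :
    k * (logAbundancy (p ^ (j + 1)) - logAbundancy (p ^ j)) =
      log ((∑ i ∈ range (j + 2), p ^ i : ℕ) ^ k / (p * ∑ i ∈ range (j + 1), p ^ i : ℕ) ^ k) := by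
  have hp0 : (0 : ℝ) < p := mod_cast hp.pos
  have hσ := one_le_sigma_one_prime_pow hp j
  rw [logAbundancy_prime_pow_succ hp, add_sub_cancel_left, ← div_pow, log_pow,
    ← sigma_one_apply_prime_pow hp (i := j), ← sigma_one_apply_prime_pow hp (i := j + 1),
    sigma_one_prime_pow_succ hp]
  congr 2
  push_cast
  have : (0 : ℝ) < p * σ 1 (p ^ j) := mul_pos hp0 (by linarith)
  field_simp

theorem IsColossallyAbundantExponent.logAbundancy_sub_le (he : IsColossallyAbundantExponent k p e)
    (hp : p.Prime) (hk : 0 < k) (b : ℕ) :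
    logAbundancy (p ^ b) - b * (1 / k * log p) ≤ logAbundancy (p ^ e) - e * (1 / k * log p) := by
  have hp0 : (0 : ℝ) < p := mod_cast hp.pos
  have hk0 : (0 : ℝ) < k := mod_cast hk
  have hG (j : ℕ) : (0 : ℝ) < (p * ∑ i ∈ range (j + 1), p ^ i : ℕ) ^ k := by
    have : 0 < p * ∑ i ∈ range (j + 1), p ^ i :=
      mul_pos hp.pos (sum_pos (fun i _ => pow_pos hp.pos i) ⟨0, by simp⟩)
    positivity
  have hincr {j : ℕ} (hj : j < e) :
      1 / k * log p ≤ logAbundancy (p ^ (j + 1)) - logAbundancy (p ^ j) := by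
    rw [one_div, inv_mul_le_iff₀ hk0, mul_logAbundancy_prime_pow_succ_sub hp]
    refine log_le_log hp0 ?_
    rw [le_div_iff₀ (hG j)]
    exact_mod_cast he.1 j hj
  have hdecr : logAbundancy (p ^ (e + 1)) - logAbundancy (p ^ e) ≤ 1 / k * log p := by
    rw [one_div, le_inv_mul_iff₀ hk0, mul_logAbundancy_prime_pow_succ_sub hp]
    refine log_le_log (div_pos ?_ (hG e)) ?_
    · have : 0 < ∑ i ∈ range (e + 2), p ^ i :=
        sum_pos (fun i _ => pow_pos hp.pos i) ⟨0, by simp⟩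
      positivity
    · rw [div_le_iff₀ (hG e)]
      exact_mod_cast he.2
  rcases le_total b e with hbe | heb
  · refine Nat.decreasingInduction' (P := fun b => logAbundancy (p ^ b) - b * (1 / k * log p) ≤ _)
      (fun j hj _ ih => ?_) hbe le_rfl
    have := hincr hj
    push_cast at ih
    linarith
  · induction b, heb using Nat.le_induction with
    | base => exact le_rfl
    | succ b heb ih =>
      have := logAbundancy_prime_pow_succ_le_succ hp heb
      push_cast
      linarith

lemma log_prod_pow_primesBelow (x : ℕ) (e : ℕ → ℕ) :
    log (∏ p ∈ Nat.primesBelow x, p ^ e p : ℕ) = ∑ p ∈ Nat.primesBelow x, e p * log p := by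
  push_cast
  rw [log_prod fun p hp => by simp [(Nat.prime_of_mem_primesBelow hp).ne_zero]]
  simp only [log_pow]

lemma log_prod_sigma_div_prod_pow_primesBelow (x : ℕ) (e : ℕ → ℕ) :
    log ((∏ p ∈ Nat.primesBelow x, ∑ i ∈ range (e p + 1), p ^ i : ℕ) /
      (∏ p ∈ Nat.primesBelow x, p ^ e p : ℕ)) =
        ∑ p ∈ Nat.primesBelow x, logAbundancy (p ^ e p) := by
  rw [Nat.cast_prod, Nat.cast_prod, ← prod_div_distrib, log_prod]
  · refine sum_congr rfl fun p hp => ?_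
    rw [logAbundancy, sigma_one_apply_prime_pow (Nat.prime_of_mem_primesBelow hp)]
  · intro p hp
    have hprime := Nat.prime_of_mem_primesBelow hp
    rw [← sigma_one_apply_prime_pow hprime]
    have := one_le_sigma_one_prime_pow hprime (e p)
    have hpow : ((p ^ e p : ℕ) : ℝ) ≠ 0 := by simp [hprime.ne_zero]
    exact div_ne_zero (by linarith) hpow

theorem logAbundancy_le_of_isColossallyAbundantExponent {k x n : ℕ} {e : ℕ → ℕ} (hn : n ≠ 0)
    (hk : 0 < k) (hkx : k ≤ x * log x)
    (he : ∀ p ∈ Nat.primesBelow x, IsColossallyAbundantExponent k p (e p)) :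
    logAbundancy n ≤
      log ((∏ p ∈ Nat.primesBelow x, ∑ i ∈ range (e p + 1), p ^ i : ℕ) /
        (∏ p ∈ Nat.primesBelow x, p ^ e p : ℕ)) +
      (log n - log (∏ p ∈ Nat.primesBelow x, p ^ e p : ℕ)) / k := by
  have hk0 : (0 : ℝ) < k := mod_cast hk
  have hprime {p : ℕ} (hp : p ∈ Nat.primesBelow x) : p.Prime := Nat.prime_of_mem_primesBelow hp
  have hmain : logAbundancy n - 1 / k * log n ≤
      ∑ p ∈ Nat.primesBelow x, (logAbundancy (p ^ e p) - e p * (1 / k * log p)) := by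
    refine logAbundancy_sub_le_sum hn (fun p hp => (he p hp).logAbundancy_sub_le (hprime hp) hk)
      fun p hp hpx => logAbundancy_prime_pow_le_mul_log hp ?_
    have hxp : x ≤ p := by
      by_contra! h
      exact hpx (Nat.mem_primesBelow.mpr ⟨h, hp⟩)
    have hx0 : (0 : ℝ) < x := Nat.cast_pos.mpr <| Nat.pos_of_ne_zero fun h => by
      simp only [h, Nat.cast_zero, zero_mul] at hkx
      linarith
    calc (1 : ℝ) = 1 / k * k := (one_div_mul_cancel hk0.ne').symm
      _ ≤ 1 / k * (x * log x) := by gcongr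
      _ ≤ 1 / k * (p * log p) := by gcongr
  have hsum : ∑ p ∈ Nat.primesBelow x, (e p : ℝ) * (1 / k * log p) =
      (∑ p ∈ Nat.primesBelow x, e p * log p) / k := by
    rw [sum_div]
    exact sum_congr rfl fun p _ => by ring
  rw [sum_sub_distrib, hsum] at hmain
  rw [log_prod_sigma_div_prod_pow_primesBelow, log_prod_pow_primesBelow, sub_div]
  linarith [one_div_mul_eq_div (k : ℝ) (log n)]

end ColossallyAbundantMajorant

section RobinBound

/-- Robin's inequality `σ₁(n) / n ≤ C log log N` for all `n ≤ N`, with `L = log N` ranging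
over `s`. -/
def RobinBoundOn (C : ℝ) (s : Set ℝ) : Prop :=
  ∀ L ∈ s, ∀ n : ℕ, n ≠ 0 → log n ≤ L → logAbundancy n ≤ log (C * log L)

lemma RobinBoundOn.union {C : ℝ} {s t : Set ℝ} (hs : RobinBoundOn C s) (ht : RobinBoundOn C t) :
    RobinBoundOn C (s ∪ t) :=
  fun L hL => hL.elim (hs L) (ht L)

lemma concaveOn_log_mul_log {C : ℝ} (hC : 0 < C) :
    ConcaveOn ℝ (Set.Ioi 1) fun L => log (C * log L) := by
  have hpos {L : ℝ} (hL : L ∈ Set.Ioi 1) : 0 < C * log L := mul_pos hC (log_pos hL)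
  refine ⟨convex_Ioi 1, fun u hu v hv a b ha hb hab => ?_⟩
  have hlog : a • log u + b • log v ≤ log (a • u + b • v) :=
    strictConcaveOn_log_Ioi.concaveOn.2 (Set.Ioi_subset_Ioi zero_le_one hu)
      (Set.Ioi_subset_Ioi zero_le_one hv) ha hb hab
  calc a • log (C * log u) + b • log (C * log v)
      ≤ log (a • (C * log u) + b • (C * log v)) :=
        strictConcaveOn_log_Ioi.concaveOn.2 (hpos hu) (hpos hv) ha hb hab
    _ ≤ log (C * log (a • u + b • v)) := by
        refine log_le_log (convex_Ioi (0 : ℝ) (hpos hu) (hpos hv) ha hb hab) ?_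
        calc a • (C * log u) + b • (C * log v) = C * (a • log u + b • log v) := by
              simp only [smul_eq_mul]
              ring
          _ ≤ C * log (a • u + b • v) := by gcongr

theorem RobinBoundOn.of_affine_majorant {C a b L₁ L₂ : ℝ} (hC : 0 < C) (hb : 0 ≤ b) (hL₁ : 1 < L₁)
    (hmaj : ∀ n : ℕ, n ≠ 0 → logAbundancy n ≤ a + b * log n)
    (h₁ : a + b * L₁ ≤ log (C * log L₁)) (h₂ : a + b * L₂ ≤ log (C * log L₂)) :
    RobinBoundOn C (Set.Icc L₁ L₂) := by
  intro L hL n hn hnL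
  have hconcave : ConcaveOn ℝ (Set.Ioi 1) fun L => log (C * log L) - b * L :=
    (concaveOn_log_mul_log hC).sub ((convexOn_id (convex_Ioi 1)).smul hb)
  have hmin := hconcave.min_le_of_mem_Icc (Set.mem_Ioi.mpr hL₁)
    (Set.mem_Ioi.mpr (hL₁.trans_le (hL.1.trans hL.2))) hL
  have ha : a ≤ log (C * log L) - b * L :=
    (le_min (by linarith) (by linarith)).trans hmin
  calc logAbundancy n ≤ a + b * log n := hmaj n hn
    _ ≤ a + b * L := by gcongr
    _ ≤ log (C * log L) := by linarith

/-- The two sides are compared through `exp (-t) ≥ (1 - t / 64) ^ 64` and a rational approximation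
`a / 100` of the binary logarithm of `L`. -/
lemma log_add_le_log_mul_log {C R s t : ℝ} {L a : ℕ} (hC : 0 ≤ C) (hR : 0 < R) (hst : s ≤ t)
    (ht : t ≤ 64) (hL : 2 ^ a ≤ L ^ 100)
    (h : R ≤ C * (a * 0.0069314718) * (1 - t / 64) ^ 64) :
    log R + s ≤ log (C * log L) := by
  have hlogL : a * 0.0069314718 ≤ log L := by
    have hlog : log ((2 : ℝ) ^ a) ≤ log ((L : ℝ) ^ 100) :=
      log_le_log (by positivity) (mod_cast hL)
    rw [log_pow, log_pow] at hlog
    push_cast at hlog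
    have := mul_le_mul_of_nonneg_left log_two_gt_d9.le (Nat.cast_nonneg (α := ℝ) a)
    linarith
  have hexp : (1 - t / 64) ^ 64 ≤ exp (-t) := by
    simpa using one_sub_div_pow_le_exp_neg (n := 64) (mod_cast ht)
  rw [← log_exp t] at hst
  refine (add_le_add_right hst _).trans ?_
  rw [← log_mul hR.ne' (exp_pos t).ne']
  refine log_le_log (by positivity) ?_
  calc R * exp t ≤ C * log L * exp (-t) * exp t := by
        gcongr
        exact h.trans (by gcongr)
    _ = C * log L := by rw [mul_assoc, ← exp_add, neg_add_cancel, exp_zero, mul_one]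

theorem RobinBoundOn.of_isColossallyAbundantExponent {C L₁ L₂ : ℝ} {k x A K : ℕ} {e : ℕ → ℕ}
    (hC : 0 < C) (hk : 0 < k) (hkx : k ≤ x * log x)
    (he : ∀ p ∈ Nat.primesBelow x, IsColossallyAbundantExponent k p (e p))
    (hA : (∏ p ∈ Nat.primesBelow x, ∑ i ∈ range (e p + 1), p ^ i) * 10 ^ 5 ≤
      A * ∏ p ∈ Nat.primesBelow x, p ^ e p)
    (hK : 2 ^ K ≤ ∏ p ∈ Nat.primesBelow x, p ^ e p) (hL₁ : 1 < L₁)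
    (h₁ : log (A / 10 ^ 5) + (L₁ - K * log 2) / k ≤ log (C * log L₁))
    (h₂ : log (A / 10 ^ 5) + (L₂ - K * log 2) / k ≤ log (C * log L₂)) :
    RobinBoundOn C (Set.Icc L₁ L₂) := by
  have : (0 : ℝ) < k := mod_cast hk
  refine .of_affine_majorant (a := log (A / 10 ^ 5) - K * log 2 / k) (b := 1 / k) hC
    (by positivity) hL₁ (fun n hn => ?_) (le_of_eq_of_le (by ring) h₁) (le_of_eq_of_le (by ring) h₂)
  have hN : (0 : ℝ) < (∏ p ∈ Nat.primesBelow x, p ^ e p : ℕ) :=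
    mod_cast (pow_pos two_pos K).trans_le hK
  have hσ : 0 < ∏ p ∈ Nat.primesBelow x, ∑ i ∈ range (e p + 1), p ^ i :=
    prod_pos fun p hp => sum_pos
      (fun i _ => pow_pos (Nat.prime_of_mem_primesBelow hp).pos i) ⟨0, by simp⟩
  have hlogA : log ((∏ p ∈ Nat.primesBelow x, ∑ i ∈ range (e p + 1), p ^ i : ℕ) /
      (∏ p ∈ Nat.primesBelow x, p ^ e p : ℕ)) ≤ log (A / 10 ^ 5) := by
    refine log_le_log (div_pos (mod_cast hσ) hN) ?_
    rw [div_le_div_iff₀ hN (by positivity)]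
    exact_mod_cast hA
  have hlogN : K * log 2 / k ≤ log (∏ p ∈ Nat.primesBelow x, p ^ e p : ℕ) / k := by
    rw [← log_pow]
    gcongr
    exact_mod_cast hK
  have := logAbundancy_le_of_isColossallyAbundantExponent hn hk hkx he
  rw [sub_div] at this
  linarith [one_div_mul_eq_div (k : ℝ) (log n)]

lemma logMertensProd_le_log {x A : ℕ}
    (hA : (∏ p ∈ Nat.primesLE x, p) * 10 ^ 5 ≤ A * ∏ p ∈ Nat.primesLE x, (p - 1)) :
    logMertensProd x ≤ log (A / 10 ^ 5) := by
  have hsub {p : ℕ} (hp : p ∈ Nat.primesLE x) : (0 : ℝ) < p - 1 :=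
    sub_pos.mpr (mod_cast (Nat.mem_primesLE.mp hp).2.one_lt)
  have hpos {p : ℕ} (hp : p ∈ Nat.primesLE x) : (0 : ℝ) < p := by linarith [hsub hp]
  have heq : logMertensProd x =
      log ((∏ p ∈ Nat.primesLE x, (p : ℝ)) / ∏ p ∈ Nat.primesLE x, ((p : ℝ) - 1)) := by
    rw [← prod_div_distrib, log_prod fun p hp => (div_pos (hpos hp) (hsub hp)).ne']
    refine sum_congr rfl fun p hp => ?_
    rw [one_sub_div (hpos hp).ne', ← log_inv, inv_div]
  rw [heq]
  refine log_le_log (div_pos (prod_pos fun p => hpos) (prod_pos fun p => hsub)) ?_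
  rw [div_le_div_iff₀ (prod_pos fun p => hsub) (by positivity)]
  have hcast : ∏ p ∈ Nat.primesLE x, ((p : ℝ) - 1) = (∏ p ∈ Nat.primesLE x, (p - 1) : ℕ) := by
    rw [Nat.cast_prod]
    exact prod_congr rfl fun p hp => by rw [Nat.cast_pred (Nat.mem_primesLE.mp hp).2.pos]
  rw [hcast, ← Nat.cast_prod]
  exact_mod_cast hA

lemma mul_log_two_le_theta {x K : ℕ} (hK : 2 ^ K ≤ ∏ p ∈ Nat.primesLE x, p) :
    K * log 2 ≤ θ x := by
  rw [Chebyshev.theta_eq_sum_primesLE_log, ← log_prod fun p hp =>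
    Nat.cast_ne_zero.mpr (Nat.mem_primesLE.mp hp).2.ne_zero, ← log_pow, ← Nat.cast_prod]
  exact log_le_log (by positivity) (mod_cast hK)

theorem RobinBoundOn.of_prod_primesLE {C L₁ L₂ : ℝ} {d A K : ℕ} (hC : 0 < C) (hd : 0 < d)
    (hA : (∏ p ∈ Nat.primesLE (2 ^ d), p) * 10 ^ 5 ≤ A * ∏ p ∈ Nat.primesLE (2 ^ d), (p - 1))
    (hK : 2 ^ K ≤ ∏ p ∈ Nat.primesLE (2 ^ d), p) (hL₁ : 1 < L₁)
    (h₁ : log (A / 10 ^ 5) + (L₁ / log 2 - K) / (2 ^ d * d) ≤ log (C * log L₁))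
    (h₂ : log (A / 10 ^ 5) + (L₂ / log 2 - K) / (2 ^ d * d) ≤ log (C * log L₂)) :
    RobinBoundOn C (Set.Icc L₁ L₂) := by
  have : (0 : ℝ) < d := mod_cast hd
  have : 0 < log 2 := log_pos one_lt_two
  refine .of_affine_majorant (a := log (A / 10 ^ 5) - K / (2 ^ d * d))
    (b := 1 / (2 ^ d * d * log 2)) hC (by positivity) hL₁ (fun n hn => ?_)
    (le_of_eq_of_le (by field_simp; ring) h₁) (le_of_eq_of_le (by field_simp; ring) h₂)
  have hx : 2 ≤ 2 ^ d := Nat.le_self_pow hd.ne' 2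
  calc logAbundancy n
      ≤ logMertensProd (2 ^ d) + (log n - θ (2 ^ d : ℕ)) / ((2 ^ d : ℕ) * log (2 ^ d : ℕ)) :=
        logAbundancy_le_logMertensProd hn hx
    _ ≤ log (A / 10 ^ 5) + (log n - K * log 2) / ((2 ^ d : ℕ) * log (2 ^ d : ℕ)) := by
        gcongr
        · exact logMertensProd_le_log hA
        · exact mul_log_two_le_theta hK
    _ = log (A / 10 ^ 5) - K / (2 ^ d * d) + 1 / (2 ^ d * d * log 2) * log n := by
        rw [Nat.cast_pow, log_pow, Nat.cast_ofNat]
        field_simp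
        ring

end RobinBound

section PrimeProducts

/-- The product `∏ i < 2 ^ d, f (a + i)`, multiplied out along a binary tree so that its kernel
evaluation has recursion depth `d` and multiplies factors of similar size. -/
def dyadicProd (f : ℕ → ℕ) : ℕ → ℕ → ℕ
  | 0, a => f a
  | d + 1, a => dyadicProd f d a * dyadicProd f d (a + 2 ^ d)

lemma dyadicProd_eq_prod_range (f : ℕ → ℕ) (d a : ℕ) :
    dyadicProd f d a = ∏ i ∈ range (2 ^ d), f (a + i) := by
  induction d generalizing a with
  | zero => simp [dyadicProd]
  | succ d ih =>
    rw [dyadicProd, ih, ih, pow_succ, mul_two, prod_range_add]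
    simp only [add_assoc]

/-- A primality test for `n < 2 ^ 16` by a single gcd computation, in terms of those operations that
the kernel evaluates on binary numerals. -/
def passesPrimeTest (n : ℕ) : Bool :=
  bif n.blt 256 then !n.ble 1 && (n.gcd (n - 1).factorial).beq 1
  else (n.gcd (Nat.factorial 255)).beq 1

lemma prime_iff_coprime_factorial {n b : ℕ} (hbn : b < n) (hnb : n < (b + 1) ^ 2) :
    n.Prime ↔ 2 ≤ n ∧ n.Coprime b.factorial := by
  refine ⟨fun hn => ⟨hn.two_le, hn.coprime_factorial_of_lt hbn⟩, fun ⟨hn, hcop⟩ => ?_⟩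
  by_contra hprime
  have hsq : n.minFac ^ 2 ≤ n := Nat.minFac_sq_le_self (two_pos.trans_le hn) hprime
  have hle : n.minFac ≤ b :=
    Nat.lt_succ_iff.mp (lt_of_pow_lt_pow_left₀ 2 (by lia) (hsq.trans_lt hnb))
  exact (Nat.coprime_factorial_iff (by lia)).mp hcop |>.not_ge hle

lemma passesPrimeTest_iff_prime {n : ℕ} (hn : n < 2 ^ 16) : passesPrimeTest n ↔ n.Prime := by
  rcases lt_or_ge n 256 with h | h
  · rcases n with _ | _ | n
    · decide
    · decide
    · rw [prime_iff_coprime_factorial (b := n + 1) (by lia) (by nlinarith)]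
      simp [passesPrimeTest, h, Nat.Coprime, Nat.ble]
  · rw [prime_iff_coprime_factorial (b := 255) (by lia) (by lia)]
    simp [passesPrimeTest, h.not_gt, Nat.Coprime]
    lia

lemma prod_primesLE_two_pow (f : ℕ → ℕ) {d : ℕ} (hd : 1 < d) (hd' : d ≤ 16) :
    ∏ p ∈ Nat.primesLE (2 ^ d), f p =
      dyadicProd (fun p => bif passesPrimeTest p then f p else 1) d 0 := by
  have hnot : ¬ (2 ^ d).Prime := Nat.Prime.not_prime_pow hd
  have hprimes : Nat.primesLE (2 ^ d) = (range (2 ^ d)).filter Nat.Prime := by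
    ext p
    simp only [Nat.mem_primesLE, mem_filter, mem_range]
    grind
  rw [hprimes, prod_filter, dyadicProd_eq_prod_range]
  refine prod_congr rfl fun p hp => ?_
  have hp16 : p < 2 ^ 16 := (mem_range.mp hp).trans_le (Nat.pow_le_pow_right two_pos hd')
  have := passesPrimeTest_iff_prime hp16
  rw [zero_add]
  by_cases h : p.Prime <;> simp_all

end PrimeProducts

section SmallRange

lemma RobinBoundOn.trans {C L₁ L₂ L₃ : ℝ} (h₁₂ : RobinBoundOn C (Set.Icc L₁ L₂))
    (h₂₃ : RobinBoundOn C (Set.Icc L₂ L₃)) : RobinBoundOn C (Set.Icc L₁ L₃) := fun L hL =>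
  (Set.Icc_subset_Icc_union_Icc hL).elim (h₁₂ L) (h₂₃ L)

lemma div_log_two_le {L : ℝ} (hL : 0 ≤ L) : L / log 2 ≤ L * 1.442695043 := by
  rw [div_le_iff₀ (log_pos one_lt_two), mul_assoc]
  exact le_mul_of_one_le_right hL (by linarith [log_two_gt_d9])

lemma le_two_pow_mul_log {k d : ℕ} (h : k ≤ 2 ^ d * (d * 0.6931471803 : ℝ)) :
    (k : ℝ) ≤ (2 ^ d : ℕ) * log (2 ^ d : ℕ) := by
  rw [Nat.cast_pow, Nat.cast_ofNat, log_pow]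
  exact h.trans (by gcongr; exact log_two_gt_d9.le)

theorem RobinBoundOn.of_dyadicProd {C : ℝ} {d A K L₁ L₂ a₁ a₂ : ℕ} (hC : 0 < C) (hd : 1 < d)
    (hd' : d ≤ 16) (hA₀ : 0 < A) (hL₁ : 1 < L₁)
    (hA : dyadicProd (fun p => bif passesPrimeTest p then p else 1) d 0 * 10 ^ 5 ≤
      A * dyadicProd (fun p => bif passesPrimeTest p then p - 1 else 1) d 0)
    (hK : 2 ^ K ≤ dyadicProd (fun p => bif passesPrimeTest p then p else 1) d 0)
    (ht₁ : (L₁ * 1.442695043 - K : ℝ) / (2 ^ d * d) ≤ 64) (ha₁ : 2 ^ a₁ ≤ L₁ ^ 100)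
    (h₁ : A / 10 ^ 5 ≤ C * (a₁ * 0.0069314718) *
      (1 - (L₁ * 1.442695043 - K : ℝ) / (2 ^ d * d) / 64) ^ 64)
    (ht₂ : (L₂ * 1.442695043 - K : ℝ) / (2 ^ d * d) ≤ 64) (ha₂ : 2 ^ a₂ ≤ L₂ ^ 100)
    (h₂ : A / 10 ^ 5 ≤ C * (a₂ * 0.0069314718) *
      (1 - (L₂ * 1.442695043 - K : ℝ) / (2 ^ d * d) / 64) ^ 64) :
    RobinBoundOn C (Set.Icc L₁ L₂) := by
  have hA₀' : (0 : ℝ) < A / 10 ^ 5 := by positivity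
  refine .of_prod_primesLE (d := d) (A := A) (K := K) hC (by lia)
    (by rwa [prod_primesLE_two_pow _ hd hd', prod_primesLE_two_pow _ hd hd'])
    (by rwa [prod_primesLE_two_pow _ hd hd']) (mod_cast hL₁)
    (log_add_le_log_mul_log hC.le hA₀' ?_ ht₁ ha₁ h₁)
    (log_add_le_log_mul_log hC.le hA₀' ?_ ht₂ ha₂ h₂)
  all_goals
    gcongr
    exact div_log_two_le (Nat.cast_nonneg _)

set_option exponentiation.threshold 2000

lemma robinBoundOn_Icc_16_40 : RobinBoundOn 1.842 (Set.Icc (16 : ℕ) (40 : ℕ)) := by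
  refine .of_isColossallyAbundantExponent (k := 80) (x := 2 ^ 5) (A := 564752) (K := 37)
    (e := fun p => [23, 5, 3, 2, 2].countP (p ≤ ·)) (by norm_num) (by norm_num)
    (le_two_pow_mul_log (by norm_num)) (by decide +kernel) (by decide +kernel) (by decide +kernel)
    (by norm_num) ?_ ?_
  · exact log_add_le_log_mul_log (t := -0.1205) (a := 400) (by norm_num) (by norm_num)
      (by norm_num; linarith [log_two_gt_d9]) (by norm_num) (by norm_num) (by norm_num)
  · exact log_add_le_log_mul_log (t := 0.1795) (a := 532) (by norm_num) (by norm_num)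
      (by norm_num; linarith [log_two_gt_d9]) (by norm_num) (by norm_num) (by norm_num)

lemma robinBoundOn_Icc_40_120 : RobinBoundOn 1.842 (Set.Icc (40 : ℕ) (120 : ℕ)) := by
  refine .of_isColossallyAbundantExponent (k := 300) (x := 2 ^ 7) (A := 740765) (K := 100)
    (e := fun p => [67, 7, 5, 3, 2, 2, 2].countP (p ≤ ·)) (by norm_num) (by norm_num)
    (le_two_pow_mul_log (by norm_num)) (by decide +kernel) (by decide +kernel) (by decide +kernel)
    (by norm_num) ?_ ?_
  · exact log_add_le_log_mul_log (t := -0.0977) (a := 532) (by norm_num) (by norm_num)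
      (by norm_num; linarith [log_two_gt_d9]) (by norm_num) (by norm_num) (by norm_num)
  · exact log_add_le_log_mul_log (t := 0.169) (a := 690) (by norm_num) (by norm_num)
      (by norm_num; linarith [log_two_gt_d9]) (by norm_num) (by norm_num) (by norm_num)

lemma robinBoundOn_Icc_120_384 : RobinBoundOn 1.842 (Set.Icc (120 : ℕ) (384 : ℕ)) := by
  refine .of_isColossallyAbundantExponent (k := 1200) (x := 2 ^ 8) (A := 952205) (K := 319)
    (e := fun p => [211, 19, 7, 3, 3, 2, 2, 2, 2].countP (p ≤ ·)) (by norm_num) (by norm_num)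
    (le_two_pow_mul_log (by norm_num)) (by decide +kernel) (by decide +kernel) (by decide +kernel)
    (by norm_num) ?_ ?_
  · exact log_add_le_log_mul_log (t := -0.0842) (a := 690) (by norm_num) (by norm_num)
      (by norm_num; linarith [log_two_gt_d9]) (by norm_num) (by norm_num) (by norm_num)
  · exact log_add_le_log_mul_log (t := 0.136) (a := 858) (by norm_num) (by norm_num)
      (by norm_num; linarith [log_two_gt_d9]) (by norm_num) (by norm_num) (by norm_num)

lemma robinBoundOn_Icc_384_700 : RobinBoundOn 1.842 (Set.Icc (384 : ℕ) (700 : ℕ)) := by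
  apply RobinBoundOn.of_dyadicProd (d := 9) (A := 1120375) (K := 702) (a₁ := 858) (a₂ := 945)
  case hA | hK => decide +kernel
  all_goals norm_num

lemma robinBoundOn_Icc_700_1536 : RobinBoundOn 1.842 (Set.Icc (700 : ℕ) (1536 : ℕ)) := by
  apply RobinBoundOn.of_dyadicProd (d := 10) (A := 1239975) (K := 1419) (a₁ := 945) (a₂ := 1058)
  case hA | hK => decide +kernel
  all_goals norm_num

lemma robinBoundOn_Icc_1536_3072 : RobinBoundOn 1.842 (Set.Icc (1536 : ℕ) (3072 : ℕ)) := by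
  apply RobinBoundOn.of_dyadicProd (d := 11) (A := 1361412) (K := 2864) (a₁ := 1058) (a₂ := 1158)
  case hA | hK => decide +kernel
  all_goals norm_num

lemma robinBoundOn_Icc_3072_6144 : RobinBoundOn 1.842 (Set.Icc (3072 : ℕ) (6144 : ℕ)) := by
  apply RobinBoundOn.of_dyadicProd (d := 12) (A := 1484633) (K := 5810) (a₁ := 1158) (a₂ := 1258)
  case hA | hK => decide +kernel
  all_goals norm_num

set_option maxRecDepth 100000 in
lemma robinBoundOn_Icc_6144_14500 : RobinBoundOn 1.842 (Set.Icc (6144 : ℕ) (14500 : ℕ)) := by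
  apply RobinBoundOn.of_dyadicProd (d := 13) (A := 1606427) (K := 11634) (a₁ := 1258) (a₂ := 1382)
  case hA | hK => decide +kernel
  all_goals norm_num

set_option maxRecDepth 100000 in
lemma dyadicProd_fifteen_mul_le :
    dyadicProd (fun p => bif passesPrimeTest p then p else 1) 15 0 * 10 ^ 5 ≤
      1852524 * dyadicProd (fun p => bif passesPrimeTest p then p - 1 else 1) 15 0 := by
  decide +kernel

set_option maxRecDepth 100000 in
lemma two_pow_le_dyadicProd_fifteen :
    2 ^ 46908 ≤ dyadicProd (fun p => bif passesPrimeTest p then p else 1) 15 0 := by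
  decide +kernel

lemma robinBoundOn_Icc_14500_32768 : RobinBoundOn 1.842 (Set.Icc (14500 : ℕ) (32768 : ℕ)) := by
  apply RobinBoundOn.of_dyadicProd (d := 15) (A := 1852524) (K := 46908) (a₁ := 1382) (a₂ := 1500)
  case hA => exact dyadicProd_fifteen_mul_le
  case hK => exact two_pow_le_dyadicProd_fifteen
  all_goals norm_num

theorem robinBoundOn_Icc_16_32768 : RobinBoundOn 1.842 (Set.Icc 16 32768) := by
  exact_mod_cast robinBoundOn_Icc_16_40.trans <| robinBoundOn_Icc_40_120.trans <|
    robinBoundOn_Icc_120_384.trans <| robinBoundOn_Icc_384_700.trans <|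
    robinBoundOn_Icc_700_1536.trans <| robinBoundOn_Icc_1536_3072.trans <|
    robinBoundOn_Icc_3072_6144.trans <| robinBoundOn_Icc_6144_14500.trans
    robinBoundOn_Icc_14500_32768

end SmallRange

section PsiIntegral

/-- The integral `∫ ψ(t) / t² dt` over `1 ≤ t ≤ M`, evaluated by partial summation. -/
noncomputable def psiIntegral (M : ℕ) : ℝ :=
  ∑ n ∈ Ioc 0 M, Λ n * (1 / n - 1 / M)

lemma psiIntegral_succ {M : ℕ} (hM : 0 < M) :
    psiIntegral (M + 1) = psiIntegral M + ψ M / (M * (M + 1)) := by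
  have : (0 : ℝ) < M := mod_cast hM
  rw [psiIntegral, sum_Ioc_succ_top M.zero_le, sub_self, mul_zero, add_zero, psiIntegral,
    Chebyshev.psi, Nat.floor_natCast, sum_div, ← sum_add_distrib]
  refine sum_congr rfl fun n _ => ?_
  push_cast
  field_simp
  ring

lemma log_factorial_le {N : ℕ} (hN : 1 ≤ N) :
    log N.factorial ≤ N * log N - N + log N + 1 := by
  induction N, hN using Nat.le_induction with
  | base => simp
  | succ N hN ih =>
    have hN0 : (0 : ℝ) < N := mod_cast hN
    have hstep : (N + 1) * (log N - log (N + 1)) ≤ -1 := by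
      have h := log_le_sub_one_of_pos (show 0 < (N : ℝ) / (N + 1) by positivity)
      rw [log_div hN0.ne' (by positivity)] at h
      calc (N + 1) * (log N - log (N + 1)) ≤ (N + 1) * ((N : ℝ) / (N + 1) - 1) := by gcongr
        _ = -1 := by field_simp; ring
    rw [Nat.factorial_succ, Nat.cast_mul, log_mul (by positivity) (by positivity)]
    push_cast
    linarith

/-- Chebyshev's function `T(x) = log ⌊x⌋!`. -/
noncomputable def logFactorialFloor (x : ℝ) : ℝ :=
  log ⌊x⌋₊.factorial

lemma logFactorialFloor_le {z : ℝ} (hz : 1 ≤ z) :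
    logFactorialFloor z ≤ z * log z - z + log z + 1 := by
  have hfloor : 1 ≤ ⌊z⌋₊ := Nat.one_le_floor_iff z |>.mpr hz
  have hfloor1 : (1 : ℝ) ≤ ⌊z⌋₊ := mod_cast hfloor
  have hle : (⌊z⌋₊ : ℝ) ≤ z := Nat.floor_le (by linarith)
  have htangent : z * (log ⌊z⌋₊ - log z) ≤ ⌊z⌋₊ - z := by
    have h := log_le_sub_one_of_pos (show 0 < ⌊z⌋₊ / z by positivity)
    rw [log_div (by positivity) (by positivity)] at h
    calc z * (log ⌊z⌋₊ - log z) ≤ z * (⌊z⌋₊ / z - 1) := by gcongr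
      _ = ⌊z⌋₊ - z := by field_simp
  have hlog : log ⌊z⌋₊ ≤ log z := log_le_log (by linarith) hle
  have := mul_le_mul_of_nonneg_right hle (log_nonneg hfloor1)
  rw [logFactorialFloor]
  linarith [log_factorial_le hfloor]

lemma le_logFactorialFloor {z : ℝ} (hz : 1 ≤ z) :
    z * log z - z - log z ≤ logFactorialFloor z := by
  have hfloor : 1 ≤ ⌊z⌋₊ := Nat.one_le_floor_iff z |>.mpr hz
  have hfloor1 : (1 : ℝ) ≤ ⌊z⌋₊ := mod_cast hfloor
  have htangent : ⌊z⌋₊ * (log z - log ⌊z⌋₊) ≤ z - ⌊z⌋₊ := by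
    have h := log_le_sub_one_of_pos (show 0 < z / ⌊z⌋₊ by positivity)
    rw [log_div (by positivity) (by positivity)] at h
    calc ⌊z⌋₊ * (log z - log ⌊z⌋₊) ≤ ⌊z⌋₊ * (z / ⌊z⌋₊ - 1) := by gcongr
      _ = z - ⌊z⌋₊ := by field_simp
  have hfactorial : ⌊z⌋₊ * log ⌊z⌋₊ - ⌊z⌋₊ ≤ log ⌊z⌋₊.factorial := by
    have := log_nonneg hfloor1
    have := log_nonneg (show 1 ≤ 2 * π by linarith [two_le_pi])
    linarith [Stirling.le_log_factorial_stirling (Nat.one_le_iff_ne_zero.mp hfloor)]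
  have := mul_le_mul_of_nonneg_right (Nat.lt_floor_add_one z).le (log_nonneg hz)
  rw [logFactorialFloor]
  linarith

lemma log_factorial_eq_sum_vonMangoldt {N m : ℕ} (h : N ≤ m) :
    log N.factorial = ∑ n ∈ Ioc 0 m, Λ n * (N / n : ℕ) := by
  calc log N.factorial = ∑ n ∈ Ioc 0 N, log n := by
        rw [← prod_Ico_id_eq_factorial, Nat.cast_prod,
          log_prod fun n hn => Nat.cast_ne_zero.mpr (by grind)]
        rfl
    _ = ∑ n ∈ Ioc 0 N, Λ n * (N / n : ℕ) := by
        rw [← sum_Ioc_mul_zeta_eq_sum, vonMangoldt_mul_zeta]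
        simp only [log_apply]
    _ = ∑ n ∈ Ioc 0 m, Λ n * (N / n : ℕ) :=
        sum_subset (Ioc_subset_Ioc_right h) fun n hn hnN => by
          rw [Nat.div_eq_of_lt (by grind), Nat.cast_zero, mul_zero]

lemma logFactorialFloor_div (N j : ℕ) :
    logFactorialFloor (N / j) = ∑ n ∈ Ioc 0 N, Λ n * (N / n / j : ℕ) := by
  rw [logFactorialFloor, Nat.floor_div_eq_div,
    log_factorial_eq_sum_vonMangoldt (Nat.div_le_self N j)]
  simp only [Nat.div_div_eq_div_mul, mul_comm]

/-- The combination `⌊v/3⌋ + ⌊v/4⌋ + ⌊v/5⌋ + ⌊v/6⌋ + ⌊v/10⌋ - ⌊v/30⌋ - ⌊v/60⌋` of floors. Its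
coefficients are balanced, `1/3 + 1/4 + 1/5 + 1/6 + 1/10 - 1/30 - 1/60 = 1`, so it approximates
`v`, as in Chebyshev's method. -/
def chebyshevFloorSum (v : ℕ) : ℤ :=
  v / 3 + v / 4 + v / 5 + v / 6 + v / 10 - v / 30 - v / 60

lemma chebyshevFloorSum_sixty_mul_add (q r : ℕ) :
    chebyshevFloorSum (60 * q + r) = 60 * q + chebyshevFloorSum r := by
  have hdiv (m k : ℤ) (hm : m ≠ 0) (hmk : m * k = 60) : (60 * q + r : ℤ) / m = k * q + r / m := by
    rw [← hmk, mul_assoc, add_comm, Int.add_mul_ediv_left _ _ hm, add_comm]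
  simp only [chebyshevFloorSum, Nat.cast_add, Nat.cast_mul, Nat.cast_ofNat]
  rw [hdiv 3 20 (by simp) rfl, hdiv 4 15 (by simp) rfl, hdiv 5 12 (by simp) rfl,
    hdiv 6 10 (by simp) rfl, hdiv 10 6 (by simp) rfl, hdiv 30 2 (by simp) rfl,
    hdiv 60 1 (by simp) rfl]
  ring

lemma chebyshevFloorSum_nonneg (v : ℕ) : 0 ≤ chebyshevFloorSum v := by
  have hr : ∀ r < 60, 0 ≤ chebyshevFloorSum r := by decide
  rw [← Nat.div_add_mod v 60, chebyshevFloorSum_sixty_mul_add]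
  linarith [hr (v % 60) (Nat.mod_lt v (by simp))]

lemma sub_two_le_chebyshevFloorSum (v : ℕ) : v - 2 ≤ chebyshevFloorSum v := by
  have hr : ∀ r < 60, (r : ℕ) - 2 ≤ chebyshevFloorSum r := by decide
  have := hr (v % 60) (Nat.mod_lt v (by simp))
  rw [← Nat.div_add_mod v 60, chebyshevFloorSum_sixty_mul_add]
  push_cast at this ⊢
  linarith

lemma sum_vonMangoldt_mul_chebyshevFloorSum (N : ℕ) :
    ∑ n ∈ Ioc 0 N, Λ n * chebyshevFloorSum (N / n) =
      logFactorialFloor (N / 3) + logFactorialFloor (N / 4) + logFactorialFloor (N / 5) +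
        logFactorialFloor (N / 6) + logFactorialFloor (N / 10) - logFactorialFloor (N / 30) -
        logFactorialFloor (N / 60) := by
  have h (j : ℕ) [j.AtLeastTwo] : logFactorialFloor (N / OfNat.ofNat j) =
      ∑ n ∈ Ioc 0 N, Λ n * (N / n / OfNat.ofNat j : ℕ) := mod_cast logFactorialFloor_div N j
  simp only [h, ← sum_add_distrib, ← sum_sub_distrib, ← mul_add, ← mul_sub, chebyshevFloorSum]
  push_cast
  rfl

lemma three_mul_psiIntegral_le {M : ℕ} (hM : 0 < M) :
    3 * M * psiIntegral M ≤
      ∑ n ∈ Ioc 0 (3 * M), Λ n * chebyshevFloorSum (3 * M / n) := by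
  have : (0 : ℝ) < M := mod_cast hM
  calc 3 * M * psiIntegral M = ∑ n ∈ Ioc 0 M, Λ n * (3 * M / n - 3) := by
        rw [psiIntegral, mul_sum]
        refine sum_congr rfl fun n _ => ?_
        field_simp
    _ ≤ ∑ n ∈ Ioc 0 M, Λ n * chebyshevFloorSum (3 * M / n) := by
        refine sum_le_sum fun n _ => mul_le_mul_of_nonneg_left ?_ vonMangoldt_nonneg
        have hfloor : (3 * M / n : ℝ) ≤ (3 * M / n : ℕ) + 1 := by
          rw [← Nat.floor_div_eq_div (K := ℝ)]
          exact_mod_cast (Nat.lt_floor_add_one _).le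
        have : ((3 * M / n : ℕ) : ℝ) - 2 ≤ chebyshevFloorSum (3 * M / n) :=
          mod_cast sub_two_le_chebyshevFloorSum (3 * M / n)
        linarith
    _ ≤ ∑ n ∈ Ioc 0 (3 * M), Λ n * chebyshevFloorSum (3 * M / n) :=
        sum_le_sum_of_subset_of_nonneg (Ioc_subset_Ioc_right (by lia)) fun n _ _ =>
          mul_nonneg vonMangoldt_nonneg (mod_cast chebyshevFloorSum_nonneg _)

theorem psiIntegral_le {M : ℕ} (hM : 20 ≤ M) :
    psiIntegral M ≤ log M - (1 - 0.55 * log 3 + 0.7 * log 2 + 0.25 * log 5) +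
      (7 * log M + 5) / (3 * M) := by
  have hM20 : (20 : ℝ) ≤ M := mod_cast hM
  have hM0 : (0 : ℝ) < M := by linarith
  have h := three_mul_psiIntegral_le (M := M) (by lia)
  rw [sum_vonMangoldt_mul_chebyshevFloorSum, Nat.cast_mul, Nat.cast_ofNat] at h
  have hlog2 := log_pos one_lt_two
  have hlog34 : log 3 ≤ log 4 := log_le_log (by norm_num) (by norm_num)
  have hlog35 : log 3 ≤ log 5 := log_le_log (by norm_num) (by norm_num)
  have hlog5 : 0 ≤ log 5 := log_nonneg (by norm_num)
  have hlog (j : ℝ) (hj : 0 < j) : log (3 * M / j) = log 3 + log M - log j := by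
    rw [log_div (by positivity) hj.ne', log_mul three_ne_zero hM0.ne']
  have hlog6 : log 6 = log 2 + log 3 := by rw [← log_mul] <;> norm_num
  have hlog30 : log 30 = log 10 + log 3 := by rw [← log_mul] <;> norm_num
  have hlog60 : log 60 = log 10 + log 6 := by rw [← log_mul] <;> norm_num
  have h3 := logFactorialFloor_le (z := 3 * M / 3) (by linarith)
  have h4 := logFactorialFloor_le (z := 3 * M / 4) (by linarith)
  have h5 := logFactorialFloor_le (z := 3 * M / 5) (by linarith)
  have h6 := logFactorialFloor_le (z := 3 * M / 6) (by linarith)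
  have h10 := logFactorialFloor_le (z := 3 * M / 10) (by linarith)
  have h30 := le_logFactorialFloor (z := 3 * M / 30) (by linarith)
  have h60 := le_logFactorialFloor (z := 3 * M / 60) (by linarith)
  rw [hlog _ (by norm_num)] at h3 h4 h5 h6 h10 h30 h60
  rw [log_four_eq] at h4 hlog34
  rw [hlog6] at h6
  rw [log_ten_eq] at h10
  rw [hlog30, log_ten_eq] at h30
  rw [hlog60, log_ten_eq, hlog6] at h60
  have hdiv : (7 * log M + 5) / (3 * M) * (3 * M) = 7 * log M + 5 :=
    div_mul_cancel₀ _ (by positivity)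
  refine le_of_mul_le_mul_left (a := 3 * (M : ℝ)) ?_ (by positivity)
  linarith

lemma log_succ_le {M : ℕ} (hM : 0 < M) : log (M + 1 : ℕ) ≤ log M + 1 / M := by
  have hM0 : (0 : ℝ) < M := mod_cast hM
  have h := log_le_sub_one_of_pos (show 0 < ((M + 1 : ℕ) : ℝ) / M by positivity)
  rw [log_div (by positivity) hM0.ne', Nat.cast_succ, add_div, div_self hM0.ne'] at h
  push_cast
  linarith

lemma psiIntegral_succ_le {M : ℕ} (hM : 2 ^ 15 ≤ M) : psiIntegral (M + 1) ≤ log M - 1.282 := by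
  have hN : (2 : ℝ) ^ 15 ≤ (M + 1 : ℕ) := mod_cast hM.trans M.le_succ
  have : (0 : ℝ) < (M + 1 : ℕ) := by positivity
  have hinv : 1 / (M : ℝ) ≤ 1 / 2 ^ 15 :=
    one_div_le_one_div_of_le (by positivity) (mod_cast hM)
  have hlogN : log (M + 1 : ℕ) / (M + 1 : ℕ) ≤ 15 * log 2 / 2 ^ 15 := by
    have hlog : log ((2 : ℝ) ^ 15) = 15 * log 2 := by simp
    rw [← hlog]
    have he : exp 1 ≤ 2 ^ 15 := by linarith [exp_one_lt_three]
    exact log_div_self_antitoneOn he (he.trans hN) hN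
  have herror : (7 * log (M + 1 : ℕ) + 5) / (3 * (M + 1 : ℕ)) ≤
      7 / 3 * (15 * log 2 / 2 ^ 15) + 5 / 3 * (1 / 2 ^ 15) :=
    calc (7 * log (M + 1 : ℕ) + 5) / (3 * (M + 1 : ℕ))
        = 7 / 3 * (log (M + 1 : ℕ) / (M + 1 : ℕ)) + 5 / 3 * (1 / (M + 1 : ℕ)) := by
          field_simp
      _ ≤ 7 / 3 * (15 * log 2 / 2 ^ 15) + 5 / 3 * (1 / 2 ^ 15) := by gcongr
  linarith [psiIntegral_le (M := M + 1) (by lia), log_succ_le (M := M) (by lia), log_two_gt_d9,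
    log_two_lt_d9, log_three_lt_d9, log_five_gt_d9]

end PsiIntegral

section MertensBarrier

/-- The barrier for the large range. With `s = log M`, the first two summands are the value at
`log n = 0` of the linear majorant `logAbundancy_le_logMertensProd`; the remaining ones are chosen
so that the barrier is nonincreasing in `M` as long as `∫ ψ(t) / t² dt ≤ s - c`. -/
noncomputable def mertensBarrier (c : ℝ) (M : ℕ) : ℝ :=
  logMertensProd M - θ M / (M * log M) + 1 / M +
    (1 / log M + 1 / log M ^ 2) * (log M - c - psiIntegral M) - (log (log M) - 1 / log M)

lemma logMertensProd_succ_sub_le {M : ℕ} (hM : 2 ≤ M) :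
    logMertensProd (M + 1) - θ (M + 1 : ℕ) / ((M + 1 : ℕ) * log (M + 1 : ℕ)) ≤
      logMertensProd M - θ M / ((M + 1 : ℕ) * log (M + 1 : ℕ)) +
        (1 / M - 1 / (M + 1 : ℕ)) := by
  have hM0 : (0 : ℝ) < M := by positivity
  have hlog : 0 < log (M + 1 : ℕ) := log_pos (mod_cast (by lia : 1 < M + 1))
  rw [logMertensProd, logMertensProd, Chebyshev.theta_eq_sum_primesLE_log,
    Chebyshev.theta_eq_sum_primesLE_log]
  by_cases hp : (M + 1).Prime
  · have hfactor := neg_log_one_sub_le_one_div (y := (M + 1 : ℕ)) (mod_cast hp.one_lt)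
    have hslope : log (M + 1 : ℕ) / ((M + 1 : ℕ) * log (M + 1 : ℕ)) = 1 / (M + 1 : ℕ) := by
      field_simp
    rw [show ((M + 1 : ℕ) : ℝ) - 1 = M by push_cast; ring] at hfactor
    rw [Nat.primesLE_succ, if_pos hp, sum_insert (Nat.notMem_primesLE M),
      sum_insert (Nat.notMem_primesLE M), add_div, hslope]
    linarith
  · have : 1 / ((M + 1 : ℕ) : ℝ) ≤ 1 / M :=
      one_div_le_one_div_of_le hM0 (mod_cast M.le_succ)
    rw [Nat.primesLE_succ, if_neg hp]
    linarith

lemma one_div_mul_log_sub_succ_le {M : ℕ} (hM : 2 ≤ M) :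
    1 / (M * log M) - 1 / ((M + 1 : ℕ) * log (M + 1 : ℕ)) ≤
      (1 / log M + 1 / log M ^ 2) / (M * (M + 1)) := by
  have hM0 : (0 : ℝ) < M := by positivity
  have hlog : 0 < log M := log_pos (mod_cast hM)
  have hmono : log M ≤ log (M + 1 : ℕ) := log_le_log hM0 (mod_cast M.le_succ)
  have hsucc := log_succ_le (M := M) (by lia)
  set s := log M
  set s' := log (M + 1 : ℕ)
  have hs' : 0 < s' := hlog.trans_le hmono
  have hdiff : M * (1 / s - 1 / s') ≤ 1 / s ^ 2 :=
    calc M * (1 / s - 1 / s') = M * (s' - s) / (s * s') := by field_simp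
      _ ≤ M * (1 / M) / (s * s) := by
          gcongr
          linarith
      _ = 1 / s ^ 2 := by field_simp
  calc 1 / (M * s) - 1 / ((M + 1 : ℕ) * s')
      = (1 / s + M * (1 / s - 1 / s')) / (M * (M + 1)) := by
        push_cast
        field_simp
        ring
    _ ≤ (1 / s + 1 / s ^ 2) / (M * (M + 1)) := by gcongr

lemma mul_sub_le_log_sub_one_div_sub {s t : ℝ} (hs : 0 < s) (hst : s ≤ t) :
    (1 / t + 1 / t ^ 2) * (t - s) ≤ (log t - 1 / t) - (log s - 1 / s) := by
  have ht : 0 < t := hs.trans_le hst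
  have hlog := log_le_sub_one_of_pos (div_pos hs ht)
  rw [log_div hs.ne' ht.ne'] at hlog
  have hinv : (t - s) / t ^ 2 ≤ 1 / s - 1 / t :=
    calc (t - s) / t ^ 2 ≤ (t - s) / (s * t) := by
          rw [sq]
          gcongr
      _ = 1 / s - 1 / t := by field_simp
  calc (1 / t + 1 / t ^ 2) * (t - s) = (1 - s / t) + (t - s) / t ^ 2 := by field_simp
    _ ≤ (log t - 1 / t) - (log s - 1 / s) := by linarith

lemma mertensBarrier_succ_le {c : ℝ} {M : ℕ} (hM : 2 ≤ M)
    (hc : psiIntegral (M + 1) ≤ log M - c) : mertensBarrier c (M + 1) ≤ mertensBarrier c M := by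
  have hM0 : (0 : ℝ) < M := by positivity
  have hlog : 0 < log M := log_pos (mod_cast hM)
  have hmono : log M ≤ log (M + 1 : ℕ) := log_le_log hM0 (mod_cast M.le_succ)
  have hprod := logMertensProd_succ_sub_le hM
  have hslope := one_div_mul_log_sub_succ_le hM
  have hloglog := mul_sub_le_log_sub_one_div_sub hlog hmono
  rw [mertensBarrier, mertensBarrier]
  set s := log M
  set s' := log (M + 1 : ℕ)
  set w := 1 / s + 1 / s ^ 2
  set w' := 1 / s' + 1 / s' ^ 2
  have hw : w' ≤ w := by
    simp only [w, w']
    gcongr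
  have htheta : θ M / (M * s) - θ M / ((M + 1 : ℕ) * s') ≤
      w * (psiIntegral (M + 1) - psiIntegral M) :=
    calc θ M / (M * s) - θ M / ((M + 1 : ℕ) * s')
        = θ M * (1 / (M * s) - 1 / ((M + 1 : ℕ) * s')) := by ring
      _ ≤ θ M * (w / (M * (M + 1))) := by gcongr
      _ ≤ ψ M * (w / (M * (M + 1))) := by
          gcongr
          exact Chebyshev.theta_le_psi _
      _ = w * (psiIntegral (M + 1) - psiIntegral M) := by
          rw [psiIntegral_succ (by lia)]
          ring
  have hgap : 0 ≤ (w - w') * (s - c - psiIntegral (M + 1)) :=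
    mul_nonneg (sub_nonneg.mpr hw) (by linarith)
  linarith

lemma mertensBarrier_le {c : ℝ} {X M : ℕ} (hX : 2 ≤ X)
    (hc : ∀ M ≥ X, psiIntegral (M + 1) ≤ log M - c) (hXM : X ≤ M) :
    mertensBarrier c M ≤ mertensBarrier c X := by
  induction M, hXM using Nat.le_induction with
  | base => exact le_rfl
  | succ M hXM ih => exact (mertensBarrier_succ_le (hX.trans hXM) (hc M hXM)).trans ih

theorem RobinBoundOn.of_mertensBarrier {C c : ℝ} {X : ℕ} (hC : 0 < C) (hX : 3 ≤ X)
    (hc : ∀ M ≥ X, psiIntegral (M + 1) ≤ log M - c) (hV : mertensBarrier c X ≤ log C) :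
    RobinBoundOn C (Set.Ici X) := by
  intro L hL n hn hnL
  set M := ⌊L⌋₊
  have hXM : X ≤ M := Nat.le_floor hL
  have hM3 : (3 : ℝ) ≤ M := mod_cast hX.trans hXM
  have hM0 : (0 : ℝ) < M := by linarith
  have hML : M ≤ L := Nat.floor_le ((Nat.cast_nonneg X).trans hL)
  have hbarrier : mertensBarrier c M ≤ log C := (mertensBarrier_le (by lia) hc hXM).trans hV
  have hs : 1 ≤ log M := (le_log_iff_exp_le hM0).mpr (by linarith [exp_one_lt_three])
  have hpsi : psiIntegral M ≤ log M - c := by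
    have : 0 ≤ ψ M / (M * (M + 1)) := div_nonneg (Chebyshev.psi_nonneg _) (by positivity)
    linarith [hc M hXM, psiIntegral_succ (M := M) (by lia)]
  have hlinear : (log n - θ M) / (M * log M) ≤ 1 / M + 1 / log M - θ M / (M * log M) :=
    calc (log n - θ M) / (M * log M) ≤ (M + 1 - θ M) / (M * log M) := by
          gcongr
          exact hnL.trans (Nat.lt_floor_add_one L).le
      _ = 1 / (M * log M) + 1 / log M - θ M / (M * log M) := by
          field_simp
          ring
      _ ≤ 1 / M + 1 / log M - θ M / (M * log M) := by
          gcongr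
          exact le_mul_of_one_le_right hM0.le hs
  have hgap : 0 ≤ (1 / log M + 1 / log M ^ 2) * (log M - c - psiIntegral M) :=
    mul_nonneg (by positivity) (sub_nonneg.mpr hpsi)
  have hloglog : log (log M) ≤ log (log L) := by gcongr
  have hmajorant := logAbundancy_le_logMertensProd hn (show 2 ≤ M by lia)
  rw [mertensBarrier] at hbarrier
  rw [log_mul hC.ne' (by linarith [log_le_log hM0 hML])]
  linarith

end MertensBarrier

section PsiIntegralCertificate

lemma sum_primesLE_le_psiIntegral {M : ℕ} (hM : 0 < M) :
    ∑ p ∈ Nat.primesLE M, ∑ k ∈ Icc 1 (p.log M), log p * (1 / (p : ℝ) ^ k - 1 / M) ≤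
      psiIntegral M := by
  have : (0 : ℝ) < M := mod_cast hM
  rw [sum_sigma', psiIntegral]
  have hinj : Set.InjOn (fun q : (_ : ℕ) × ℕ => q.1 ^ q.2)
      ((Nat.primesLE M).sigma fun p => Icc 1 (p.log M)) := by
    rintro ⟨p, k⟩ hpk ⟨q, l⟩ hql h
    simp only [coe_sigma, Set.mem_sigma_iff, SetLike.mem_coe, Nat.mem_primesLE, mem_Icc] at hpk hql
    obtain ⟨rfl, rfl⟩ := hpk.1.2.pow_inj' hql.1.2 (by lia) (by lia) h
    rfl
  calc ∑ q ∈ (Nat.primesLE M).sigma fun p => Icc 1 (p.log M),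
        log q.1 * (1 / (q.1 : ℝ) ^ q.2 - 1 / M)
      = ∑ q ∈ (Nat.primesLE M).sigma fun p => Icc 1 (p.log M),
          Λ (q.1 ^ q.2) * (1 / ((q.1 ^ q.2 : ℕ) : ℝ) - 1 / M) := by
        refine sum_congr rfl fun q hq => ?_
        simp only [mem_sigma, Nat.mem_primesLE, mem_Icc] at hq
        rw [vonMangoldt_apply_pow (by lia), vonMangoldt_apply_prime hq.1.2, Nat.cast_pow]
    _ = ∑ n ∈ ((Nat.primesLE M).sigma fun p => Icc 1 (p.log M)).image fun q => q.1 ^ q.2,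
          Λ n * (1 / (n : ℝ) - 1 / M) := by rw [sum_image hinj]
    _ ≤ ∑ n ∈ Ioc 0 M, Λ n * (1 / n - 1 / M) := by
        refine sum_le_sum_of_subset_of_nonneg ?_ fun n hn _ => ?_
        · simp only [image_subset_iff, mem_sigma, Nat.mem_primesLE, mem_Icc, mem_Ioc]
          exact fun q hq => ⟨pow_pos hq.1.2.pos _, Nat.pow_le_of_le_log hM.ne' hq.2.2⟩
        · obtain ⟨hn0, hnM⟩ := mem_Ioc.mp hn
          refine mul_nonneg vonMangoldt_nonneg (sub_nonneg.mpr ?_)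
          exact one_div_le_one_div_of_le (mod_cast hn0) (mod_cast hnM)

/-- An integer approximation from below of `Q * M * ∑ₖ (1 / p ^ k - 1 / M)` over `p ^ k ≤ M`, the
coefficient of `log p` in `Q * M * psiIntegral M`. -/
def psiIntegralWeight (M Q p : ℕ) : ℕ :=
  ∑ k ∈ Icc 1 (p.log M), (Q * M / p ^ k - Q)

lemma psiIntegralWeight_le {M Q p : ℕ} (hM : 0 < M) (hp : 0 < p) :
    (psiIntegralWeight M Q p : ℝ) ≤ Q * M * ∑ k ∈ Icc 1 (p.log M), (1 / (p : ℝ) ^ k - 1 / M) := by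
  have : (0 : ℝ) < M := mod_cast hM
  rw [psiIntegralWeight, Nat.cast_sum, mul_sum]
  refine sum_le_sum fun k hk => ?_
  have hpow : p ^ k ≤ M := Nat.pow_le_of_le_log hM.ne' (mem_Icc.mp hk).2
  have hQ : Q ≤ Q * M / p ^ k :=
    (Nat.le_div_iff_mul_le (pow_pos hp k)).mpr (Nat.mul_le_mul_left Q hpow)
  calc ((Q * M / p ^ k - Q : ℕ) : ℝ) = (Q * M / p ^ k : ℕ) - Q := Nat.cast_sub hQ
    _ ≤ (Q * M : ℕ) / (p ^ k : ℕ) - Q := by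
        gcongr
        exact Nat.cast_div_le
    _ = Q * M * (1 / p ^ k - 1 / M) := by
        push_cast
        field_simp

lemma log_le_mul_psiIntegral {M Q N : ℕ} (hM : 0 < M) (hN : 0 < N)
    (h : N ≤ ∏ p ∈ Nat.primesLE M, p ^ psiIntegralWeight M Q p) :
    log N ≤ Q * M * psiIntegral M :=
  calc log N ≤ log (∏ p ∈ Nat.primesLE M, p ^ psiIntegralWeight M Q p : ℕ) :=
        log_le_log (mod_cast hN) (mod_cast h)
    _ = ∑ p ∈ Nat.primesLE M, psiIntegralWeight M Q p * log p := by
        rw [Nat.cast_prod, log_prod fun p hp =>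
          Nat.cast_ne_zero.mpr (pow_pos (Nat.prime_of_mem_primesLE hp).pos _).ne']
        simp only [Nat.cast_pow, log_pow]
    _ ≤ ∑ p ∈ Nat.primesLE M,
          (Q * M * ∑ k ∈ Icc 1 (p.log M), (1 / (p : ℝ) ^ k - 1 / M)) * log p := by
        gcongr with p hp
        exact psiIntegralWeight_le hM (Nat.prime_of_mem_primesLE hp).pos
    _ = Q * M * ∑ p ∈ Nat.primesLE M, ∑ k ∈ Icc 1 (p.log M),
          log p * (1 / (p : ℝ) ^ k - 1 / M) := by
        simp only [mul_sum, sum_mul]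
        exact sum_congr rfl fun p _ => sum_congr rfl fun k _ => by ring
    _ ≤ Q * M * psiIntegral M := by
        gcongr
        exact sum_primesLE_le_psiIntegral hM

set_option maxRecDepth 100000 in
lemma four_pow_le_dyadicProd : 4 ^ 13330000 ≤ dyadicProd
    (fun p => bif passesPrimeTest p then p ^ psiIntegralWeight (2 ^ 15) (2 ^ 6) p else 1) 15 0 := by
  decide +kernel

end PsiIntegralCertificate

section LargeRange

lemma logMertensProd_two_pow_fifteen_le : logMertensProd (2 ^ 15) ≤ log (1852524 / 10 ^ 5) := by
  refine mod_cast logMertensProd_le_log (A := 1852524) ?_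
  rw [prod_primesLE_two_pow _ (by norm_num) (by norm_num),
    prod_primesLE_two_pow _ (by norm_num) (by norm_num)]
  exact dyadicProd_fifteen_mul_le

lemma le_theta_two_pow_fifteen : 46908 * log 2 ≤ θ (2 ^ 15 : ℕ) := by
  refine mod_cast mul_log_two_le_theta (K := 46908) ?_
  rw [prod_primesLE_two_pow _ (by norm_num) (by norm_num)]
  exact two_pow_le_dyadicProd_fifteen

lemma le_psiIntegral_two_pow_fifteen : 13330000 / 2 ^ 20 * log 2 ≤ psiIntegral (2 ^ 15) := by
  have h := log_le_mul_psiIntegral (M := 2 ^ 15) (Q := 2 ^ 6) (by norm_num)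
    (pow_pos four_pos 13330000) <| four_pow_le_dyadicProd.trans_eq
      (prod_primesLE_two_pow _ (by norm_num) (by norm_num)).symm
  rw [Nat.cast_pow, log_pow, Nat.cast_ofNat, Nat.cast_ofNat, log_four_eq] at h
  push_cast at h
  linarith

set_option exponentiation.threshold 2000 in
lemma mertensBarrier_two_pow_fifteen_le : mertensBarrier 1.282 (2 ^ 15) ≤ log 1.842 := by
  have hlog2 := log_two_gt_d9
  have hlog2' := log_two_lt_d9
  have hlog : log (2 ^ 15 : ℕ) = 15 * log 2 := by rw [Nat.cast_pow, log_pow]; norm_num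
  have hinv : 1 / (15 * log 2) ≤ 0.0961797 := by
    rw [div_le_iff₀ (by positivity)]
    linarith
  have hinv_sq : 1 / (15 * log 2) ^ 2 ≤ 0.0961797 ^ 2 := by
    rw [← one_div_pow]
    gcongr
  have htheta : 46908 / (2 ^ 15 * 15) ≤ θ (2 ^ 15 : ℕ) / ((2 ^ 15 : ℕ) * (15 * log 2)) := by
    rw [div_le_div_iff₀ (by positivity) (by positivity)]
    have := le_theta_two_pow_fifteen
    push_cast at this ⊢
    nlinarith
  have hgap : (1 / (15 * log 2) + 1 / (15 * log 2) ^ 2) *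
      (15 * log 2 - 1.282 - psiIntegral (2 ^ 15)) ≤ (0.0961797 + 0.0961797 ^ 2) * 0.3037 := by
    refine mul_le_mul_of_nonneg (by linarith) ?_ (by positivity) (by norm_num)
    linarith [le_psiIntegral_two_pow_fifteen]
  have hmertens : log (1852524 / 10 ^ 5) + 0.0332 ≤ log (1.842 * log (2 ^ 15 : ℕ)) :=
    log_add_le_log_mul_log (a := 1500) (by norm_num) (by norm_num) le_rfl (by norm_num)
      (pow_mul 2 15 100).le (by norm_num)
  rw [log_mul (by norm_num) (by rw [hlog]; positivity), hlog] at hmertens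
  rw [mertensBarrier, hlog]
  have : 1 / ((2 ^ 15 : ℕ) : ℝ) ≤ 0.00004 := by norm_num
  linarith [logMertensProd_two_pow_fifteen_le]

theorem robinBoundOn_Ici_32768 : RobinBoundOn 1.842 (Set.Ici 32768) := by
  exact_mod_cast RobinBoundOn.of_mertensBarrier (X := 2 ^ 15) (by norm_num) (by norm_num)
    (fun _ => psiIntegral_succ_le) mertensBarrier_two_pow_fifteen_le

end LargeRange

lemma IsFundDisc.emod_four {D : ℤ} (hD : IsFundDisc D) : D % 4 = 1 ∨ D % 4 = 0 := by
  rcases hD with ⟨h, -⟩ | ⟨m, rfl, -⟩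
  · exact .inl h
  · exact .inr (Int.mul_emod_right 4 m)

lemma modifiedConductor_ne_zero {D : ℤ} {f ftilde : ℕ} (hf : 0 < f)
    (hD : D % 4 = 1 ∨ D % 4 = 0) (hft1 : D % 4 = 1 → ftilde = f)
    (hft0 : D % 4 = 0 → ftilde = 2 * f) : ftilde ≠ 0 := by
  rcases hD with h | h
  · exact hft1 h ▸ hf.ne'
  · exact hft0 h ▸ mul_ne_zero two_ne_zero hf.ne'

lemma sq_modifiedConductor_le_abs {Δ D : ℤ} {f ftilde : ℕ} (hΔ : Δ < 0)
    (hfact : Δ = (f : ℤ) ^ 2 * D) (hD : D % 4 = 1 ∨ D % 4 = 0) (hft1 : D % 4 = 1 → ftilde = f)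
    (hft0 : D % 4 = 0 → ftilde = 2 * f) : (ftilde : ℤ) ^ 2 ≤ |Δ| := by
  have hDneg : D < 0 := neg_of_mul_neg_right (hfact ▸ hΔ) (sq_nonneg (f : ℤ))
  have hsq := sq_nonneg (f : ℤ)
  rw [abs_of_neg hΔ, hfact]
  rcases hD with h | h
  · rw [hft1 h]
    have := mul_le_mul_of_nonneg_left (show 1 ≤ -D by lia) hsq
    linarith
  · rw [hft0 h]
    push_cast
    have := mul_le_mul_of_nonneg_left (show 4 ≤ -D by lia) hsq
    linarith

theorem robinBoundOn_Ici_16 : RobinBoundOn 1.842 (Set.Ici 16) := by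
  rw [← Set.Icc_union_Ici_eq_Ici (show (16 : ℝ) ≤ 32768 by norm_num)]
  exact robinBoundOn_Icc_16_32768.union robinBoundOn_Ici_32768

theorem stmt4_general {n : ℕ} {x : ℝ} (hn : n ≠ 0) (hx : 10 ^ 7 ≤ x) (hnx : n ≤ x) :
    (σ 1 n : ℝ) / n ≤ 1.842 * log (log x) := by
  have hn0 : (0 : ℝ) < n := mod_cast Nat.pos_of_ne_zero hn
  have hσ : (0 : ℝ) < σ 1 n := mod_cast sigma_pos 1 n hn
  have hexp : exp 16 ≤ 10 ^ 7 :=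
    calc exp 16 = exp 1 ^ 16 := by rw [← exp_nat_mul]; norm_num
      _ ≤ 2.7182818286 ^ 16 := by gcongr; exact exp_one_lt_d9.le
      _ ≤ 10 ^ 7 := by norm_num
  have hlogx : 16 ≤ log x := (le_log_iff_exp_le (hn0.trans_le hnx)).mpr (hexp.trans hx)
  refine (log_le_log_iff (div_pos hσ hn0) (mul_pos (by norm_num) (log_pos (by linarith)))).mp ?_
  exact robinBoundOn_Ici_16 (log x) hlogx n hn (log_le_log hn0 hnx)

/-- For `|Δ| ≥ 10^14`, `σ₁(f̃)/f̃ ≤ 1.842 log log |Δ|^{1/2}`. -/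
theorem stmt4 (Δ D : ℤ) (f : ℕ) (hf : 0 < f) (hΔneg : Δ < 0)
    (hfact : Δ = (f : ℤ) ^ 2 * D) (hD : IsFundDisc D)
    (ftilde : ℕ) (hft1 : D % 4 = 1 → ftilde = f) (hft0 : D % 4 = 0 → ftilde = 2 * f)
    (hbig : (10 : ℝ) ^ 14 ≤ |(Δ : ℝ)|) :
    ((ArithmeticFunction.sigma 1) ftilde : ℝ) / (ftilde : ℝ) ≤
      1.842 * Real.log (Real.log (Real.sqrt |(Δ : ℝ)|)) := by
  have hsq := sq_modifiedConductor_le_abs hΔneg hfact hD.emod_four hft1 hft0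
  exact stmt4_general (modifiedConductor_ne_zero hf hD.emod_four hft1 hft0)
    (le_sqrt_of_sq_le (by linarith)) (le_sqrt_of_sq_le (mod_cast hsq))
end

section
/- For a discriminant Δ ≠ −3, −4 (i.e. Δ < 0, Δ ≡ 0,1 mod 4, Δ ∉ {−3,−4}), the class number of the order of discriminant Δ satisfies C(Δ) ≤ π^{-1}·|Δ|^{1/2}·(2 + log|Δ|). -/
/-- The class number of the imaginary quadratic order of discriminant `Δ`, counted as the
number of reduced primitive positive definite binary quadratic forms of discriminant `Δ`. -/
noncomputable def classNumber (Δ : ℤ) : ℕ :=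
  Nat.card {f : ℤ × ℤ × ℤ // 0 < f.1 ∧ Int.gcd (Int.gcd f.1 f.2.1) f.2.2 = 1 ∧
    f.2.1 ^ 2 - 4 * f.1 * f.2.2 = Δ ∧ |f.2.1| ≤ f.1 ∧ f.1 ≤ f.2.2 ∧
    ((|f.2.1| = f.1 ∨ f.1 = f.2.2) → 0 ≤ f.2.1)}

/-!
Weight every reduced form `f` of discriminant `-D` by the points `(x, y)` with `f(x, y) ≤ M ^ 2`
coprime to `D`, and count these points in two ways.

* Each form is positive definite, so its points are those of a lattice of covolume `√D / 2` inside
  a disc. They fill `D φ(D)` of the `D ^ 2` residue classes modulo `D`, hence their number is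
  asymptotic to `2 π φ(D) / D ^ (3 / 2) * M ^ 2`, whatever the form.
* By Gauss, the representations of `n` by all the forms together, up to the automorphisms `± 1`,
  correspond to square roots of `-D` modulo `4 n / g ^ 2` for `g ^ 2 ∣ n`. With the odd quadratic
  character `χ` modulo `D`, there are at most `2 ∑ χ(d)` of them, the sum being over the divisors
  `d` of `n`. Summing over `n ≤ M ^ 2` by the hyperbola method, with Abel summation for
  `∑ χ(d) / d`, gives at most `φ(D) / D * M ^ 2 * (2 + log D)` up to lower order terms.

Dividing by `M ^ 2` and letting `M` tend to infinity bounds the number of reduced forms.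
-/

open scoped MatrixGroups

/-- The integral binary quadratic form `a x ^ 2 + b x y + c y ^ 2`. -/
@[ext]
structure BinaryQuadraticForm where
  a : ℤ
  b : ℤ
  c : ℤ

namespace BinaryQuadraticForm

section Reduction

variable {f : BinaryQuadraticForm} {γ : SL(2, ℤ)}

/-- The value of the form at `(x, y)`. -/
def eval (f : BinaryQuadraticForm) (x y : ℤ) : ℤ := f.a * x ^ 2 + f.b * x * y + f.c * y ^ 2

/-- The discriminant `b ^ 2 - 4 a c`. -/
def disc (f : BinaryQuadraticForm) : ℤ := f.b ^ 2 - 4 * f.a * f.c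

/-- The right action of `SL(2, ℤ)`: the value of `f.comp γ` at a column vector `v` is that of `f`
at `γ v`. -/
def comp (f : BinaryQuadraticForm) (γ : SL(2, ℤ)) : BinaryQuadraticForm where
  a := f.eval (γ 0 0) (γ 1 0)
  b := 2 * f.a * γ 0 0 * γ 0 1 + f.b * (γ 0 0 * γ 1 1 + γ 0 1 * γ 1 0) + 2 * f.c * γ 1 0 * γ 1 1
  c := f.eval (γ 0 1) (γ 1 1)

/-- Primitive positive definite forms that are reduced in the sense of Gauss, so that every proper
equivalence class contains exactly one of them. -/
structure IsReduced (f : BinaryQuadraticForm) : Prop where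
  a_pos : 0 < f.a
  primitive : Int.gcd (Int.gcd f.a f.b) f.c = 1
  abs_b_le : |f.b| ≤ f.a
  a_le_c : f.a ≤ f.c
  b_nonneg : |f.b| = f.a ∨ f.a = f.c → 0 ≤ f.b

theorem det_eq_one (γ : SL(2, ℤ)) : γ 0 0 * γ 1 1 - γ 0 1 * γ 1 0 = 1 := by
  rw [← Matrix.det_fin_two, γ.det_coe]

theorem comp_one (f : BinaryQuadraticForm) : f.comp 1 = f := by
  ext <;> simp [comp, eval]

theorem comp_mul (f : BinaryQuadraticForm) (γ δ : SL(2, ℤ)) :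
    f.comp (γ * δ) = (f.comp γ).comp δ := by
  ext <;>
  · simp only [comp, eval, Matrix.SpecialLinearGroup.coe_mul, Matrix.mul_apply, Fin.sum_univ_two]
    ring

theorem disc_comp (f : BinaryQuadraticForm) (γ : SL(2, ℤ)) : (f.comp γ).disc = f.disc := by
  simp only [disc, comp, eval]
  linear_combination
    (f.b ^ 2 - 4 * f.a * f.c) * (γ 0 0 * γ 1 1 - γ 0 1 * γ 1 0 + 1) * det_eq_one γ

theorem IsReduced.isUnit_of_dvd (hf : f.IsReduced) {d : ℤ} (ha : d ∣ f.a) (hb : d ∣ f.b)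
    (hc : d ∣ f.c) : IsUnit d := by
  have h := Int.dvd_coe_gcd (Int.dvd_coe_gcd ha hb) hc
  rw [hf.primitive] at h
  exact isUnit_of_dvd_one h

theorem IsReduced.le_eval (hf : f.IsReduced) {x y : ℤ} (hx : x ≠ 0) (hy : y ≠ 0) :
    f.a - |f.b| + f.c ≤ f.eval x y := by
  have hX : 1 ≤ |x| := Int.one_le_abs hx
  have hY : 1 ≤ |y| := Int.one_le_abs hy
  have hxy : -(|f.b| * |x| * |y|) ≤ f.b * x * y := by
    rw [← abs_mul, ← abs_mul]
    exact neg_abs_le _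
  have hb : 0 ≤ |f.b| * (|x| ^ 2 - |x| * |y| + |y| ^ 2 - 1) :=
    mul_nonneg (abs_nonneg _) (by nlinarith [sq_nonneg (|x| - |y|)])
  have ha : 0 ≤ (f.a - |f.b|) * (|x| ^ 2 + |y| ^ 2 - 2) :=
    mul_nonneg (sub_nonneg.2 hf.abs_b_le) (by nlinarith)
  have hc : 0 ≤ (f.c - f.a) * (|y| ^ 2 - 1) :=
    mul_nonneg (sub_nonneg.2 hf.a_le_c) (by nlinarith)
  rw [eval, ← sq_abs x, ← sq_abs y]
  linarith

theorem IsReduced.not_b_eq_a_and_a_eq_c (hf : f.IsReduced) (h : f.disc ≠ -3) :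
    ¬ (f.b = f.a ∧ f.a = f.c) := by
  rintro ⟨hb, hc⟩
  have ha : f.a = 1 :=
    (Int.isUnit_iff.1 (hf.isUnit_of_dvd dvd_rfl hb.symm.dvd hc.dvd)).resolve_right
      (by linarith [hf.a_pos])
  exact h (by rw [disc, ← hc, hb, ha]; norm_num)

theorem IsReduced.not_b_eq_zero_and_a_eq_c (hf : f.IsReduced) (h : f.disc ≠ -4) :
    ¬ (f.b = 0 ∧ f.a = f.c) := by
  rintro ⟨hb, hc⟩
  have ha : f.a = 1 :=
    (Int.isUnit_iff.1 (hf.isUnit_of_dvd dvd_rfl (hb ▸ dvd_zero _) hc.dvd)).resolve_right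
      (by linarith [hf.a_pos])
  exact h (by rw [disc, ← hc, hb, ha]; norm_num)

theorem eq_one_or_eq_neg_one_of_entries (h₁₀ : γ 1 0 = 0) (h₀₁ : γ 0 1 = 0) : γ = 1 ∨ γ = -1 := by
  have hdet : γ 0 0 * γ 1 1 = 1 := by simpa [h₁₀] using det_eq_one γ
  rcases Int.eq_one_or_neg_one_of_mul_eq_one' hdet with ⟨h₀₀, h₁₁⟩ | ⟨h₀₀, h₁₁⟩
  · left
    ext i j
    fin_cases i <;> fin_cases j <;> simp [h₀₀, h₀₁, h₁₀, h₁₁]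
  · right
    ext i j
    fin_cases i <;> fin_cases j <;> simp [h₀₀, h₀₁, h₁₀, h₁₁]

/- A translation moves `b` by a multiple of `2 a`, which reducedness does not allow. -/
theorem IsReduced.eq_one_or_eq_neg_one_of_lower_left_eq_zero (hf : f.IsReduced)
    (hfγ : (f.comp γ).IsReduced) (h : γ 1 0 = 0) : γ = 1 ∨ γ = -1 := by
  have hdet : γ 0 0 * γ 1 1 = 1 := by simpa [h] using det_eq_one γ
  obtain ⟨t, ht, hb⟩ : ∃ t, (t = γ 0 1 ∨ t = -γ 0 1) ∧ (f.comp γ).b = f.b + 2 * f.a * t := by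
    rcases Int.eq_one_or_neg_one_of_mul_eq_one' hdet with ⟨h₀₀, h₁₁⟩ | ⟨h₀₀, h₁₁⟩
    · exact ⟨γ 0 1, .inl rfl, by simp only [comp, h, h₀₀, h₁₁]; ring⟩
    · exact ⟨-γ 0 1, .inr rfl, by simp only [comp, h, h₀₀, h₁₁]; ring⟩
  have ha : (f.comp γ).a = f.a := by
    rcases Int.eq_one_or_neg_one_of_mul_eq_one hdet with h₀₀ | h₀₀ <;> simp [comp, eval, h, h₀₀]
  have ha_pos := hf.a_pos
  have hf_bound := abs_le.1 hf.abs_b_le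
  have hfγ_bound := abs_le.1 hfγ.abs_b_le
  have ht0 : t = 0 := by
    by_contra hne
    rcases lt_or_gt_of_ne hne with h | h
    · have hbγ : (f.comp γ).b = -(f.comp γ).a := by nlinarith
      have := hfγ.b_nonneg (.inl (by rw [hbγ, abs_neg, abs_of_pos hfγ.a_pos]))
      omega
    · have hbf : f.b = -f.a := by nlinarith
      have := hf.b_nonneg (.inl (by rw [hbf, abs_neg, abs_of_pos ha_pos]))
      omega
  exact eq_one_or_eq_neg_one_of_entries h (by omega)

/- Up to sign such a `γ` is `!![0, -1; 1, s]`, which makes `c` the new leading coefficient. -/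
theorem IsReduced.upper_left_ne_zero (hf : f.IsReduced) (hfγ : (f.comp γ).IsReduced)
    (h3 : f.disc ≠ -3) (h4 : f.disc ≠ -4) (hle : (f.comp γ).a ≤ f.a) : γ 0 0 ≠ 0 := by
  intro h
  have hdet : γ 0 1 * γ 1 0 = -1 := by simpa [h, neg_eq_iff_eq_neg] using det_eq_one γ
  have hunit : IsUnit (γ 0 1 * γ 1 0) := hdet ▸ isUnit_one.neg
  have h₀₁ : γ 0 1 ^ 2 = 1 := Int.isUnit_sq (isUnit_of_mul_isUnit_left hunit)
  have h₁₀ : γ 1 0 ^ 2 = 1 := Int.isUnit_sq (isUnit_of_mul_isUnit_right hunit)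
  have haγ : (f.comp γ).a = f.c := by simp [comp, eval, h, h₁₀]
  have hac : f.a = f.c := le_antisymm hf.a_le_c (haγ ▸ hle)
  have hb : (f.comp γ).b = -f.b + 2 * f.a * (γ 1 0 * γ 1 1) := by
    simp only [comp, h, hac]
    linear_combination f.b * hdet
  have hb0 := hf.b_nonneg (.inr hac)
  have hbound := abs_le.1 hf.abs_b_le
  have hbound' := abs_le.1 hfγ.abs_b_le
  have ha_pos := hf.a_pos
  have ht_nonneg : 0 ≤ γ 1 0 * γ 1 1 := by
    by_contra! ht
    nlinarith
  have ht_le : γ 1 0 * γ 1 1 ≤ 1 := by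
    by_contra! ht
    nlinarith
  obtain ht | ht : γ 1 0 * γ 1 1 = 0 ∨ γ 1 0 * γ 1 1 = 1 := by omega
  · have h₁₁ : γ 1 1 = 0 := (mul_eq_zero.1 ht).resolve_left fun h0 ↦ by simp [h0] at h₁₀
    have hcγ : (f.comp γ).c = f.a := by simp [comp, eval, h₀₁, h₁₁]
    have := hfγ.b_nonneg (.inr (by rw [haγ, hcγ, hac]))
    exact hf.not_b_eq_zero_and_a_eq_c h4 ⟨by rw [ht] at hb; linarith, hac⟩
  · exact hf.not_b_eq_a_and_a_eq_c h3 ⟨by rw [ht] at hb; linarith, hac⟩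

theorem IsReduced.eq_one_or_eq_neg_one_of_comp_a_le (hf : f.IsReduced)
    (hfγ : (f.comp γ).IsReduced) (h3 : f.disc ≠ -3) (h4 : f.disc ≠ -4)
    (hle : (f.comp γ).a ≤ f.a) : γ = 1 ∨ γ = -1 := by
  by_cases h₁₀ : γ 1 0 = 0
  · exact hf.eq_one_or_eq_neg_one_of_lower_left_eq_zero hfγ h₁₀
  · have hlt := (hf.le_eval (hf.upper_left_ne_zero hfγ h3 h4 hle) h₁₀).trans hle
    have hba := hf.abs_b_le
    have hac := hf.a_le_c
    have hb0 := hf.b_nonneg (.inl (by linarith))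
    rw [abs_of_nonneg hb0] at *
    exact absurd ⟨by linarith, by linarith⟩ (hf.not_b_eq_a_and_a_eq_c h3)

/-- This contains both the uniqueness of the reduced form in its class and the triviality of its
automorphisms. -/
theorem IsReduced.eq_one_or_eq_neg_one (hf : f.IsReduced) (hfγ : (f.comp γ).IsReduced)
    (h3 : f.disc ≠ -3) (h4 : f.disc ≠ -4) : γ = 1 ∨ γ = -1 := by
  rcases le_total (f.comp γ).a f.a with hle | hle
  · exact hf.eq_one_or_eq_neg_one_of_comp_a_le hfγ h3 h4 hle
  · have hinv : (f.comp γ).comp γ⁻¹ = f := by rw [← comp_mul, mul_inv_cancel, comp_one]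
    have := hfγ.eq_one_or_eq_neg_one_of_comp_a_le (γ := γ⁻¹) (hinv.symm ▸ hf)
      (by rwa [disc_comp]) (by rwa [disc_comp]) (by rwa [hinv])
    rcases this with h | h
    · exact .inl (inv_eq_one.1 h)
    · exact .inr (by rw [← inv_inv γ, h]; simp)

theorem comp_neg (f : BinaryQuadraticForm) (γ : SL(2, ℤ)) : f.comp (-γ) = f.comp γ := by
  ext <;> simp [comp, eval]

theorem IsReduced.eq_and_eq_or_eq_neg_of_comp_eq {g : BinaryQuadraticForm} {δ : SL(2, ℤ)}
    (hf : f.IsReduced) (hg : g.IsReduced) (h3 : f.disc ≠ -3) (h4 : f.disc ≠ -4)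
    (h : f.comp γ = g.comp δ) : f = g ∧ (γ = δ ∨ γ = -δ) := by
  have hfg : f.comp (γ * δ⁻¹) = g := by rw [comp_mul, h, ← comp_mul, mul_inv_cancel, comp_one]
  have hγδ := hf.eq_one_or_eq_neg_one (hfg.symm ▸ hg) h3 h4
  constructor
  · rcases hγδ with h1 | h1
    · rw [← hfg, h1, comp_one]
    · rw [← hfg, h1, comp_neg, comp_one]
  · exact hγδ.imp mul_inv_eq_one.1 fun h1 ↦ by rw [← inv_mul_cancel_right γ δ, h1, neg_one_mul]

end Reduction

section Representations

variable {f g : BinaryQuadraticForm} {D n : ℕ} {x y : ℤ}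

theorem comp_T_zpow_b (f : BinaryQuadraticForm) (k : ℤ) :
    (f.comp (ModularGroup.T ^ k)).b = f.b + 2 * f.a * k := by
  simp only [comp, ModularGroup.coe_T_zpow, Matrix.of_apply, Matrix.cons_val',
    Matrix.cons_val_zero, Matrix.cons_val_fin_one, Matrix.cons_val_one, mul_one, mul_zero, add_zero]
  ring

theorem exists_comp_of_isCoprime (f : BinaryQuadraticForm) (hxy : IsCoprime x y)
    (h : 0 < f.eval x y) :
    ∃ γ : SL(2, ℤ), γ 0 0 = x ∧ γ 1 0 = y ∧
      0 ≤ (f.comp γ).b ∧ (f.comp γ).b < 2 * f.eval x y := by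
  obtain ⟨γ, rfl, rfl⟩ := hxy.exists_SL2_col 0
  set m := 2 * f.eval (γ 0 0) (γ 1 0)
  have hcol (k : ℤ) (i : Fin 2) : (γ * ModularGroup.T ^ k) i 0 = γ i 0 := by
    simp [Matrix.SpecialLinearGroup.coe_mul, Matrix.mul_apply, ModularGroup.coe_T_zpow]
  refine ⟨γ * ModularGroup.T ^ (-((f.comp γ).b / m)), hcol _ _, hcol _ _, ?_⟩
  have hb : (f.comp (γ * ModularGroup.T ^ (-((f.comp γ).b / m)))).b = (f.comp γ).b % m := by
    rw [comp_mul, comp_T_zpow_b, Int.emod_def, mul_neg, ← sub_eq_add_neg]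
    rfl
  rw [hb]
  exact ⟨Int.emod_nonneg _ (by omega), Int.emod_lt_of_pos _ (by omega)⟩

theorem eq_of_disc_eq (ha : f.a = g.a) (hb : f.b = g.b) (hd : f.disc = g.disc) (h0 : f.a ≠ 0) :
    f = g := by
  refine BinaryQuadraticForm.ext ha hb (mul_left_cancel₀ (mul_ne_zero four_ne_zero h0) ?_)
  rw [disc, disc, ← ha, ← hb] at hd
  linarith

/-- The number of square roots `b` of `-D` modulo `4 n`, where `b` is taken modulo `2 n`. -/
def sqrtCount (D n : ℕ) : ℕ := {b ∈ Finset.range (2 * n) | 4 * n ∣ b ^ 2 + D}.card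

/-- `(f, x, y)` consists of a reduced form `f` of discriminant `-D` and a solution of
`f(x, y) = n`. -/
structure IsRep (D n : ℕ) (u : BinaryQuadraticForm × ℤ × ℤ) : Prop where
  isReduced : u.1.IsReduced
  disc_eq : u.1.disc = -D
  eval_eq : u.1.eval u.2.1 u.2.2 = n

variable {u v : BinaryQuadraticForm × ℤ × ℤ} {γ δ : SL(2, ℤ)}

theorem IsRep.comp_a_eq (hu : IsRep D n u) (hx : γ 0 0 = u.2.1) (hy : γ 1 0 = u.2.2) :
    (u.1.comp γ).a = n := by
  rw [← hu.eval_eq, ← hx, ← hy, comp]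

theorem IsRep.comp_disc_eq (hu : IsRep D n u) (γ : SL(2, ℤ)) : (u.1.comp γ).disc = -D := by
  rw [disc_comp, hu.disc_eq]

theorem IsRep.eq_or_eq_neg_of_comp_b_eq (hu : IsRep D n u) (hv : IsRep D n v) (h3 : D ≠ 3)
    (h4 : D ≠ 4) (hn : n ≠ 0) (hγ : γ 0 0 = u.2.1 ∧ γ 1 0 = u.2.2)
    (hδ : δ 0 0 = v.2.1 ∧ δ 1 0 = v.2.2) (hb : (u.1.comp γ).b = (v.1.comp δ).b) :
    u = v ∨ u = (v.1, -v.2.1, -v.2.2) := by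
  have ha := hu.comp_a_eq hγ.1 hγ.2
  have hcomp : u.1.comp γ = v.1.comp δ :=
    eq_of_disc_eq (by rw [ha, hv.comp_a_eq hδ.1 hδ.2]) hb (by rw [hu.comp_disc_eq, hv.comp_disc_eq])
      (by rw [ha]; exact_mod_cast hn)
  have hdisc := hu.disc_eq
  obtain ⟨hf, hγδ⟩ := hu.isReduced.eq_and_eq_or_eq_neg_of_comp_eq hv.isReduced (by omega)
    (by omega) hcomp
  simp only [Prod.ext_iff, ← hγ.1, ← hγ.2, ← hδ.1, ← hδ.2]
  exact hγδ.imp (fun h ↦ ⟨hf, by rw [h], by rw [h]⟩) fun h ↦ ⟨hf, by simp [h], by simp [h]⟩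

/- Gauss: a primitive representation `f(x, y) = n` extends to a form `(n, b, c)` equivalent to `f`
with `0 ≤ b < 2 n`, and `b` determines the representation up to sign. -/
theorem card_rep_le_of_isCoprime (h3 : D ≠ 3) (h4 : D ≠ 4) (hn : n ≠ 0)
    {U : Finset (BinaryQuadraticForm × ℤ × ℤ)} (hU : ∀ u ∈ U, IsRep D n u)
    (hcop : ∀ u ∈ U, IsCoprime u.2.1 u.2.2) : U.card ≤ 2 * sqrtCount D n := by
  classical
  have hex (u) (hu : u ∈ U) : ∃ γ : SL(2, ℤ), γ 0 0 = u.2.1 ∧ γ 1 0 = u.2.2 ∧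
      0 ≤ (u.1.comp γ).b ∧ (u.1.comp γ).b < 2 * n := by
    rw [← (hU u hu).eval_eq]
    exact u.1.exists_comp_of_isCoprime (hcop u hu) (by rw [(hU u hu).eval_eq]; omega)
  choose! γ hx hy hb_nonneg hb_lt using hex
  refine Finset.card_le_mul_card_image_of_maps_to
    (f := fun u ↦ (u.1.comp (γ u)).b.toNat) (fun u hu ↦ ?_) 2 fun B _ ↦ ?_
  · obtain ⟨b, hb⟩ := Int.eq_ofNat_of_zero_le (hb_nonneg u hu)
    have hdisc : (b : ℤ) ^ 2 - 4 * n * (u.1.comp (γ u)).c = -D := by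
      rw [← (hU u hu).comp_a_eq (hx u hu) (hy u hu), ← hb, ← (hU u hu).comp_disc_eq (γ u), disc]
    have := hb_lt u hu
    simp only [hb, Int.toNat_natCast, Finset.mem_filter, Finset.mem_range]
    exact ⟨by omega, Int.natCast_dvd_natCast.1 ⟨(u.1.comp (γ u)).c, by push_cast; linarith⟩⟩
  · rcases {u ∈ U | (u.1.comp (γ u)).b.toNat = B}.eq_empty_or_nonempty with h | ⟨v, hv⟩
    · simp [h]
    · refine (Finset.card_le_card (t := {v, (v.1, -v.2.1, -v.2.2)}) fun u hu ↦ ?_).trans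
        Finset.card_le_two
      obtain ⟨hu, huB⟩ := Finset.mem_filter.1 hu
      obtain ⟨hv, hvB⟩ := Finset.mem_filter.1 hv
      have := hb_nonneg u hu
      have := hb_nonneg v hv
      rw [Finset.mem_insert, Finset.mem_singleton]
      exact (hU u hu).eq_or_eq_neg_of_comp_b_eq (hU v hv) h3 h4 hn ⟨hx u hu, hy u hu⟩
        ⟨hx v hv, hy v hv⟩ (by omega)

end Representations

end BinaryQuadraticForm

section Character

open scoped NumberTheorySymbols

open ZMod

variable {D : ℕ}

theorem exists_dirichletCharacter_eq_of_periodic {R : Type*} [CommMonoidWithZero R] [NeZero D]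
    (ψ : ℕ →* R) (hper : ∀ n, ψ (n % D) = ψ n) (hzero : ∀ n, ¬ n.Coprime D → ψ n = 0) :
    ∃ χ : DirichletCharacter R D, ∀ n : ℕ, χ n = ψ n := by
  refine ⟨{ toFun := fun z ↦ ψ z.val, map_one' := ?_, map_mul' := ?_, map_nonunit' := ?_ },
    fun n ↦ ?_⟩
  · rw [← Nat.cast_one, val_natCast, hper, map_one]
  · intro x y
    rw [val_mul, hper, map_mul]
  · intro z hz
    refine hzero _ fun h ↦ hz ?_
    rw [← natCast_zmod_val z]
    exact (isUnit_iff_coprime _ _).2 h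
  · change ψ (n : ZMod D).val = ψ n
    rw [val_natCast, hper]

/-- `χ` takes the value `1` at every prime that does not divide `D` and modulo four times which
`-D` is a square. Together with oddness this is all that is needed of the Kronecker symbol
`(-D / ·)`. -/
def EqOneAtSplitPrimes (χ : DirichletCharacter ℤ D) : Prop :=
  ∀ p b : ℕ, p.Prime → p.Coprime D → 4 * p ∣ b ^ 2 + D → χ p = 1

theorem jacobiSym_neg_eq_one_of_dvd {p b : ℕ} (hp : p.Prime) (hpD : p.Coprime D)
    (h : p ∣ b ^ 2 + D) : J(-(D : ℤ) | p) = 1 := by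
  have hpb : ¬ p ∣ b := fun hb ↦ hp.coprime_iff_not_dvd.1 hpD
    ((Nat.dvd_add_right (dvd_pow hb two_ne_zero)).1 h)
  have hsq : -(D : ℤ) ≡ (b : ℤ) ^ 2 [ZMOD p] :=
    Int.modEq_iff_dvd.2 (by rw [sub_neg_eq_add]; exact_mod_cast h)
  rw [jacobiSym.mod_left' hsq]
  exact jacobiSym.sq_one' (by rwa [Int.gcd_natCast_natCast, Nat.gcd_comm,
    ← Nat.coprime_iff_gcd_eq_one, hp.coprime_iff_not_dvd])

theorem mod_eight_eq_seven_of_dvd {b : ℕ} (hD : D % 4 = 3) (h : 8 ∣ b ^ 2 + D) : D % 8 = 7 := by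
  have hb : b ^ 2 % 8 = 0 ∨ b ^ 2 % 8 = 1 ∨ b ^ 2 % 8 = 4 := by
    rw [Nat.pow_mod]
    have : b % 8 < 8 := Nat.mod_lt _ (by norm_num)
    interval_cases b % 8 <;> simp
  omega

theorem jacobiSym_eq_one_of_dvd {p b : ℕ} (hD : D % 4 = 3) (hp : p.Prime) (hpD : p.Coprime D)
    (h : 4 * p ∣ b ^ 2 + D) : J(p | D) = 1 := by
  have hD_odd : Odd D := Nat.odd_iff.2 (by omega)
  rcases hp.eq_two_or_odd' with rfl | hp_odd
  · rw [Nat.cast_ofNat, jacobiSym.at_two hD_odd, χ₈_nat_mod_eight, mod_eight_eq_seven_of_dvd hD h]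
    rfl
  · have hj := jacobiSym_neg_eq_one_of_dvd hp hpD ((dvd_mul_left p 4).trans h)
    rw [jacobiSym.neg _ hp_odd] at hj
    rcases Nat.odd_mod_four_iff.1 (Nat.odd_iff.1 hp_odd) with h4 | h4
    · rw [χ₄_nat_one_mod_four h4, one_mul] at hj
      rw [jacobiSym.quadratic_reciprocity_one_mod_four h4 hD_odd, hj]
    · rw [χ₄_nat_three_mod_four h4, neg_one_mul] at hj
      rw [jacobiSym.quadratic_reciprocity_three_mod_four h4 hD, hj]

theorem exists_odd_character_of_mod_four_eq_three (hD : D % 4 = 3) :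
    ∃ χ : DirichletCharacter ℤ D, χ.Odd ∧ EqOneAtSplitPrimes χ := by
  have : NeZero D := ⟨by omega⟩
  obtain ⟨χ, hχ⟩ := exists_dirichletCharacter_eq_of_periodic (D := D)
    (ψ := { toFun := fun n ↦ J(n | D), map_one' := by simp
            map_mul' := fun m n ↦ by rw [Nat.cast_mul, jacobiSym.mul_left] })
    (fun n ↦ jacobiSym.mod_left' (by simp))
    (fun n hn ↦ jacobiSym.eq_zero_iff.2 ⟨this.out, by rwa [Int.gcd_natCast_natCast]⟩)
  simp only [MonoidHom.coe_mk, OneHom.coe_mk] at hχ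
  refine ⟨χ, ?_, fun p b hp hpD h ↦ (hχ p).trans (jacobiSym_eq_one_of_dvd hD hp hpD h)⟩
  have hneg : (-1 : ZMod D) = (D - 1 : ℕ) := by rw [Nat.cast_sub (by omega)]; simp
  have hJ : J((D - 1 : ℕ) | D) = J(-1 | D) :=
    jacobiSym.mod_left' (Int.modEq_iff_dvd.2 ⟨-1, by omega⟩)
  rw [DirichletCharacter.Odd, hneg, hχ, hJ, jacobiSym.at_neg_one (Nat.odd_iff.2 (by omega)),
    χ₄_nat_three_mod_four hD]

/-- The Kronecker symbol `n ↦ (-4k / n)` on natural numbers: the Jacobi symbol `(-k / n)` for odd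
`n`, and `0` for even `n`. -/
def kroneckerNegFourMul (k : ℕ) : ℕ →* ℤ where
  toFun n := if Odd n then J(-(k : ℤ) | n) else 0
  map_one' := by simp
  map_mul' m n := by
    by_cases hm : Odd m <;> by_cases hn : Odd n <;>
      simp only [Nat.odd_mul, hm, hn, and_true, and_false, if_true, if_false, zero_mul, mul_zero]
    exact jacobiSym.mul_right' _ hm.pos.ne' hn.pos.ne'

theorem kroneckerNegFourMul_of_odd {k n : ℕ} (hn : Odd n) :
    kroneckerNegFourMul k n = J(4 * -(k : ℤ) | n) := by
  rw [jacobiSym.mul_left, jacobiSym.at_four hn, one_mul]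
  exact if_pos hn

theorem kroneckerNegFourMul_of_even {k n : ℕ} (hn : ¬ Odd n) : kroneckerNegFourMul k n = 0 :=
  if_neg hn

theorem kroneckerNegFourMul_mod (k n : ℕ) :
    kroneckerNegFourMul k (n % (4 * k)) = kroneckerNegFourMul k n := by
  have hmod : Odd (n % (4 * k)) ↔ Odd n := by
    rw [Nat.odd_iff, Nat.odd_iff, Nat.mod_mod_of_dvd _ ⟨2 * k, by ring⟩]
  by_cases h : Odd n
  · have hJ (m : ℕ) (hm : Odd m) : kroneckerNegFourMul k m = J(-(k : ℤ) | m) := if_pos hm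
    rw [hJ _ (hmod.2 h), hJ _ h, jacobiSym.mod_right _ (hmod.2 h), jacobiSym.mod_right _ h]
    simp
  · rw [kroneckerNegFourMul_of_even h, kroneckerNegFourMul_of_even (hmod.not.2 h)]

theorem kroneckerNegFourMul_eq_zero {k n : ℕ} (hn : ¬ n.Coprime (4 * k)) :
    kroneckerNegFourMul k n = 0 := by
  by_cases h : Odd n
  · rw [kroneckerNegFourMul_of_odd h, jacobiSym.eq_zero_iff, Int.gcd_comm, mul_neg, Int.gcd_neg]
    exact ⟨h.pos.ne', fun hgcd ↦ hn (by exact_mod_cast hgcd)⟩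
  · exact kroneckerNegFourMul_of_even h

theorem exists_odd_character_four_mul {k : ℕ} (hk : 0 < k) :
    ∃ χ : DirichletCharacter ℤ (4 * k), χ.Odd ∧ EqOneAtSplitPrimes χ := by
  have : NeZero (4 * k) := ⟨by omega⟩
  obtain ⟨χ, hχ⟩ := exists_dirichletCharacter_eq_of_periodic (kroneckerNegFourMul k)
    (kroneckerNegFourMul_mod k) fun _ ↦ kroneckerNegFourMul_eq_zero
  refine ⟨χ, ?_, fun p b hp hpD h ↦ ?_⟩
  · have hodd : Odd (4 * k - 1) := Nat.odd_iff.2 (by omega)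
    have hneg : (-1 : ZMod (4 * k)) = (4 * k - 1 : ℕ) := by
      rw [Nat.cast_sub (by omega), natCast_self]
      simp
    have hJ : J(4 * -(k : ℤ) | 4 * k - 1) = J(-1 | 4 * k - 1) :=
      jacobiSym.mod_left' (Int.modEq_iff_dvd.2 ⟨1, by omega⟩)
    rw [DirichletCharacter.Odd, hneg, hχ, kroneckerNegFourMul_of_odd hodd, hJ,
      jacobiSym.at_neg_one hodd, χ₄_nat_three_mod_four (by omega)]
  · have hp_odd : Odd p := Nat.coprime_two_right.1 (hpD.coprime_dvd_right ⟨2 * k, by ring⟩)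
    rw [hχ, kroneckerNegFourMul_of_odd hp_odd, mul_neg]
    exact_mod_cast jacobiSym_neg_eq_one_of_dvd hp hpD ((dvd_mul_left p 4).trans h)

theorem exists_odd_character (hD : D % 4 = 0 ∨ D % 4 = 3) (h0 : 0 < D) :
    ∃ χ : DirichletCharacter ℤ D, χ.Odd ∧ EqOneAtSplitPrimes χ := by
  rcases hD with h | h
  · obtain ⟨k, rfl⟩ := Nat.dvd_of_mod_eq_zero h
    exact exists_odd_character_four_mul (by omega)
  · exact exists_odd_character_of_mod_four_eq_three h

end Character

namespace BinaryQuadraticForm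

variable {D m n p k : ℕ}

theorem four_mul_dvd_mod_sq_add {b : ℕ} (h : 4 * n ∣ b ^ 2 + D) :
    4 * n ∣ (b % (2 * n)) ^ 2 + D := by
  have hb : b ^ 2 + D = 4 * n * (b % (2 * n) * (b / (2 * n)) + n * (b / (2 * n)) ^ 2)
      + ((b % (2 * n)) ^ 2 + D) := by
    nth_rw 1 [← Nat.mod_add_div b (2 * n)]
    ring
  rw [hb] at h
  exact (Nat.dvd_add_right (Dvd.intro _ rfl)).1 h

theorem eq_of_mod_two_mul_eq {b b' : ℕ} (hmn : m.Coprime n) (hb : b < 2 * (m * n))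
    (hb' : b' < 2 * (m * n)) (hm : b % (2 * m) = b' % (2 * m)) (hn : b % (2 * n) = b' % (2 * n)) :
    b = b' := by
  have hmod : b ≡ b' [MOD 2 * (m * n)] := by
    have h := Int.coe_lcm_dvd (Nat.modEq_iff_dvd.1 hm) (Nat.modEq_iff_dvd.1 hn)
    rw [Int.lcm_natCast_natCast, Nat.lcm_mul_left, hmn.lcm_eq_mul] at h
    exact Nat.modEq_iff_dvd.2 h
  exact hmod.eq_of_lt_of_lt hb hb'

theorem sqrtCount_mul_le (hmn : m.Coprime n) (hm : 0 < m) (hn : 0 < n) :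
    sqrtCount D (m * n) ≤ sqrtCount D m * sqrtCount D n := by
  simp only [sqrtCount]
  rw [← Finset.card_product]
  refine Finset.card_le_card_of_injOn (fun b ↦ (b % (2 * m), b % (2 * n))) ?_ ?_
  · intro b hb
    obtain ⟨-, hb⟩ := Finset.mem_filter.1 hb
    simp only [Finset.coe_product, Set.mem_prod, Finset.mem_coe, Finset.mem_filter,
      Finset.mem_range]
    exact ⟨⟨Nat.mod_lt _ (by omega), four_mul_dvd_mod_sq_add (Dvd.dvd.trans ⟨n, by ring⟩ hb)⟩,
      Nat.mod_lt _ (by omega), four_mul_dvd_mod_sq_add (Dvd.dvd.trans ⟨m, by ring⟩ hb)⟩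
  · intro b hb b' hb' h
    simp only [Finset.mem_coe, Finset.mem_filter, Finset.mem_range] at hb hb'
    exact eq_of_mod_two_mul_eq hmn hb.1 hb'.1 (congrArg Prod.fst h) (congrArg Prod.snd h)

theorem sqrtCount_one_le (D : ℕ) : sqrtCount D 1 ≤ 1 := by
  refine Finset.card_le_one.2 fun b hb b' hb' ↦ ?_
  simp only [mul_one, Finset.mem_filter, Finset.mem_range] at hb hb'
  obtain ⟨hb, hbD⟩ := hb
  obtain ⟨hb', hbD'⟩ := hb'
  interval_cases b <;> interval_cases b' <;> omega

theorem dvd_sub_or_dvd_add_of_dvd_sq_sub_sq {b b' : ℤ} (hp : p.Prime) (hb : ¬ (p : ℤ) ∣ b)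
    (h : 4 * (p : ℤ) ^ k ∣ b ^ 2 - b' ^ 2) :
    2 * (p : ℤ) ^ k ∣ b - b' ∨ 2 * (p : ℤ) ^ k ∣ b + b' := by
  obtain ⟨u, hu⟩ : Even (b - b') := by
    have : Even (b ^ 2 - b' ^ 2) := even_iff_two_dvd.2 (Dvd.dvd.trans ⟨2 * (p : ℤ) ^ k, by ring⟩ h)
    simpa [Int.even_sub, Int.even_pow] using this
  obtain rfl : b' = b - 2 * u := by linarith
  have hdvd : (p : ℤ) ^ k ∣ u * (b - u) := by
    rw [show b ^ 2 - (b - 2 * u) ^ 2 = 4 * (u * (b - u)) by ring] at h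
    exact Int.dvd_of_mul_dvd_mul_left four_ne_zero h
  have hprime : Prime (p : ℤ) := Nat.prime_iff_prime_int.1 hp
  by_cases hpu : (p : ℤ) ∣ u
  · have hpbu : ¬ (p : ℤ) ∣ b - u := fun hbu ↦ hb (by simpa using dvd_add hbu hpu)
    left
    rw [show b - (b - 2 * u) = 2 * u by ring]
    have hcop : IsCoprime ((p : ℤ) ^ k) (b - u) := (hprime.coprime_iff_not_dvd.2 hpbu).pow_left
    exact mul_dvd_mul_left 2 (hcop.dvd_of_dvd_mul_right hdvd)
  · right
    rw [show b + (b - 2 * u) = 2 * (b - u) by ring]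
    have hcop : IsCoprime ((p : ℤ) ^ k) u := (hprime.coprime_iff_not_dvd.2 hpu).pow_left
    exact mul_dvd_mul_left 2 (hcop.dvd_of_dvd_mul_left hdvd)

theorem eq_or_eq_sub_of_four_mul_dvd {b b' : ℕ} (hp : p.Prime) (hpb : ¬ p ∣ b)
    (hb : b < 2 * p ^ k) (hb' : b' < 2 * p ^ k) (hbD : 4 * p ^ k ∣ b ^ 2 + D)
    (hbD' : 4 * p ^ k ∣ b' ^ 2 + D) : b' = b ∨ b' = 2 * p ^ k - b := by
  have hdvd : 4 * (p : ℤ) ^ k ∣ (b : ℤ) ^ 2 - (b' : ℤ) ^ 2 := by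
    have h : 4 * (p : ℤ) ^ k ∣ (b : ℤ) ^ 2 + D := by exact_mod_cast hbD
    have h' : 4 * (p : ℤ) ^ k ∣ (b' : ℤ) ^ 2 + D := by exact_mod_cast hbD'
    simpa using dvd_sub h h'
  have hb0 : 0 < b := Nat.pos_of_ne_zero fun h ↦ hpb (h ▸ dvd_zero p)
  refine (dvd_sub_or_dvd_add_of_dvd_sq_sub_sq hp (by exact_mod_cast hpb) hdvd).imp
    (fun h ↦ ?_) fun h ↦ ?_
  · exact (Nat.modEq_iff_dvd.2 (by exact_mod_cast h)).eq_of_lt_of_lt hb' hb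
  · have hmod : 2 * p ^ k - b ≡ b' [MOD 2 * p ^ k] := by
      rw [Nat.modEq_iff_dvd, Nat.cast_sub hb.le]
      push_cast
      rw [show (b' : ℤ) - (2 * p ^ k - b) = b + b' - 2 * p ^ k by ring]
      exact dvd_sub h dvd_rfl
    exact (hmod.eq_of_lt_of_lt (by omega) hb').symm

theorem sqrtCount_prime_pow_le {χ : DirichletCharacter ℤ D} (hχ : EqOneAtSplitPrimes χ)
    (hp : p.Prime) (hpD : p.Coprime D) (hk : 0 < k) : (sqrtCount D (p ^ k) : ℤ) ≤ 1 + χ p := by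
  rcases {b ∈ Finset.range (2 * p ^ k) | 4 * p ^ k ∣ b ^ 2 + D}.eq_empty_or_nonempty
    with h0 | ⟨b, hb⟩
  · rw [sqrtCount, h0, Finset.card_empty]
    have hunit : IsUnit (χ p) := (ZMod.isUnit_iff_coprime p D).2 hpD |>.map χ
    rcases Int.isUnit_iff.1 hunit with h | h <;> rw [h] <;> norm_num
  · simp only [Finset.mem_filter, Finset.mem_range] at hb
    have hpk : p ∣ p ^ k := dvd_pow_self p hk.ne'
    have hpb : ¬ p ∣ b := fun hpb ↦ hp.coprime_iff_not_dvd.1 hpD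
      ((Nat.dvd_add_right (dvd_pow hpb two_ne_zero)).1 ((hpk.mul_left 4).trans hb.2))
    have hcard : sqrtCount D (p ^ k) ≤ 2 := by
      refine (Finset.card_le_card (t := {b, 2 * p ^ k - b}) fun b' hb' ↦ ?_).trans
        Finset.card_le_two
      simp only [Finset.mem_filter, Finset.mem_range] at hb'
      rw [Finset.mem_insert, Finset.mem_singleton]
      exact eq_or_eq_sub_of_four_mul_dvd hp hpb hb.1 hb'.1 hb.2 hb'.2
    rw [hχ p b hp hpD ((mul_dvd_mul_left 4 hpk).trans hb.2)]
    exact_mod_cast hcard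

theorem sqrtCount_le_prod {χ : DirichletCharacter ℤ D} (hχ : EqOneAtSplitPrimes χ) (hn : 0 < n)
    (hnD : n.Coprime D) : (sqrtCount D n : ℤ) ≤ ∏ p ∈ n.primeFactors, (1 + χ p) := by
  induction n using Nat.recOnPosPrimePosCoprime with
  | prime_pow p k hp hk =>
    rw [Nat.primeFactors_prime_pow hk.ne' hp, Finset.prod_singleton]
    exact sqrtCount_prime_pow_le hχ hp (hnD.coprime_dvd_left (dvd_pow_self p hk.ne')) hk
  | zero => omega
  | one => simpa using sqrtCount_one_le D
  | coprime a b ha hb hab iha ihb =>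
    rw [hab.primeFactors_mul, Finset.prod_union hab.disjoint_primeFactors]
    have iha := iha (by omega) hnD.coprime_mul_right
    have ihb := ihb (by omega) hnD.coprime_mul_left
    calc (sqrtCount D (a * b) : ℤ) ≤ sqrtCount D a * sqrtCount D b := by
          exact_mod_cast sqrtCount_mul_le hab (by omega) (by omega)
      _ ≤ _ := mul_le_mul iha ihb (by positivity) (le_trans (by positivity) iha)

end BinaryQuadraticForm

section SquareConvolution

variable {R : Type*} [CommRing R] (f : ℕ →*₀ R)

open ArithmeticFunction Finset

theorem isSquare_of_coprime_of_isSquare_mul {m n : ℕ} (hmn : m.Coprime n)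
    (h : IsSquare (m * n)) : IsSquare m := by
  obtain ⟨r, hr⟩ := h
  obtain ⟨d, rfl⟩ := exists_eq_pow_of_mul_eq_pow (Nat.isUnit_iff.2 hmn) (hr.trans (sq r).symm)
  exact IsSquare.sq d

theorem isSquare_prime_pow_iff {p k : ℕ} (hp : p.Prime) : IsSquare (p ^ k) ↔ Even k := by
  refine ⟨fun ⟨r, hr⟩ ↦ ?_, fun h ↦ h.isSquare_pow p⟩
  obtain ⟨j, -, rfl⟩ := (Nat.dvd_prime_pow hp).1 ⟨r, hr⟩
  exact ⟨j, Nat.pow_right_injective hp.two_le (hr.trans (pow_add _ _ _).symm)⟩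

/-- A completely multiplicative function as an arithmetic function. -/
def completelyMultiplicative : ArithmeticFunction R := ⟨f, map_zero f⟩

open Classical in
/-- The restriction of a completely multiplicative function to the squares, extended by zero. -/
noncomputable def restrictToSquares : ArithmeticFunction R :=
  ⟨fun n ↦ if IsSquare n then f n else 0, by simp⟩

theorem isMultiplicative_completelyMultiplicative :
    (completelyMultiplicative f).IsMultiplicative :=
  ⟨map_one f, fun _ ↦ map_mul f _ _⟩

theorem restrictToSquares_of_isSquare {n : ℕ} (hn : IsSquare n) : restrictToSquares f n = f n :=
  if_pos hn

theorem restrictToSquares_of_not_isSquare {n : ℕ} (hn : ¬ IsSquare n) :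
    restrictToSquares f n = 0 :=
  if_neg hn

theorem isMultiplicative_restrictToSquares : (restrictToSquares f).IsMultiplicative := by
  refine ⟨by rw [restrictToSquares_of_isSquare f IsSquare.one, map_one], fun {m n} hmn ↦ ?_⟩
  by_cases hm : IsSquare m
  · by_cases hn : IsSquare n
    · simp only [restrictToSquares_of_isSquare, hm, hn, hm.mul hn, map_mul]
    · rw [restrictToSquares_of_not_isSquare f hn, mul_zero, restrictToSquares_of_not_isSquare]
      exact fun h ↦ hn (isSquare_of_coprime_of_isSquare_mul hmn.symm (mul_comm m n ▸ h))
  · rw [restrictToSquares_of_not_isSquare f hm, zero_mul, restrictToSquares_of_not_isSquare]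
    exact fun h ↦ hm (isSquare_of_coprime_of_isSquare_mul hmn h)

theorem sum_even_pow_mul_eq_sum_pow (t : R) (k : ℕ) :
    ∑ i ∈ range (k + 1), (if Even i then t ^ i else 0) * (if k - i = 0 then 1 else 1 + t) =
      ∑ i ∈ range (k + 1), t ^ i := by
  induction k using Nat.twoStepInduction with
  | zero => simp
  | one => simp [sum_range_succ]
  | more k ih _ =>
    have hshift (i : ℕ) : (if Even (i + 2) then t ^ (i + 2) else 0) = t ^ 2 *
        if Even i then t ^ i else 0 := by
      simp only [Nat.even_add, even_two, iff_true, mul_ite, mul_zero, ← pow_add, add_comm]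
    have hgeom : ∑ i ∈ range (k + 1), t ^ (i + 2) = t ^ 2 * ∑ i ∈ range (k + 1), t ^ i := by
      simp only [sum_mul, pow_add, mul_comm (t ^ 2)]
    rw [sum_range_succ', sum_range_succ', sum_range_succ' _ (k + 2), sum_range_succ' _ (k + 1)]
    simp only [add_assoc, one_add_one_eq_two, hshift, Nat.add_sub_add_right, mul_assoc, ← mul_sum,
      ih, hgeom]
    simp [add_comm]

/- With `t = f(p)` and `x = p⁻ˢ`, the Euler factors of the Dirichlet series satisfy
`(1 - t² x²)⁻¹ · (1 + t x) / (1 - x) = ((1 - t x) (1 - x))⁻¹`. -/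
theorem restrictToSquares_mul_prodPrimeFactors :
    restrictToSquares f * prodPrimeFactors (fun p ↦ 1 + f p) =
      completelyMultiplicative f * (zeta : ArithmeticFunction R) := by
  rw [IsMultiplicative.eq_iff_eq_on_prime_powers _
    ((isMultiplicative_restrictToSquares f).mul (IsMultiplicative.prodPrimeFactors _)) _
    ((isMultiplicative_completelyMultiplicative f).mul isMultiplicative_zeta.natCast)]
  intro p k hp
  rw [coe_mul_zeta_apply, Nat.sum_divisors_prime_pow hp, mul_apply,
    Nat.sum_divisorsAntidiagonal
      (fun x y ↦ restrictToSquares f x * prodPrimeFactors (fun p ↦ 1 + f p) y),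
    Nat.sum_divisors_prime_pow hp]
  have hpow (i : ℕ) : completelyMultiplicative f (p ^ i) = f p ^ i := map_pow f p i
  simp only [hpow, ← sum_even_pow_mul_eq_sum_pow]
  refine sum_congr rfl fun i hi ↦ ?_
  have hik : i ≤ k := Nat.lt_succ_iff.1 (mem_range.1 hi)
  congr 1
  · by_cases h : Even i
    · rw [restrictToSquares_of_isSquare f (h.isSquare_pow p), map_pow, if_pos h]
    · rw [restrictToSquares_of_not_isSquare f ((isSquare_prime_pow_iff hp).not.2 h), if_neg h]
  · rw [Nat.pow_div hik hp.pos, prodPrimeFactors_apply (pow_pos hp.pos _).ne']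
    split_ifs with h
    · simp [h]
    · rw [Nat.primeFactors_prime_pow h hp, prod_singleton]

end SquareConvolution

section Character

variable {D g : ℕ}

theorem dirichletCharacter_sq_eq_one (χ : DirichletCharacter ℤ D) (hg : g.Coprime D) :
    χ g ^ 2 = 1 :=
  Int.isUnit_sq (((ZMod.isUnit_iff_coprime g D).2 hg).map χ)

/-- The completely multiplicative function `n ↦ χ n` on the natural numbers. -/
def natHom [Nontrivial (ZMod D)] (χ : DirichletCharacter ℤ D) : ℕ →*₀ ℤ :=
  χ.toMonoidWithZeroHom.comp (Nat.castRingHom (ZMod D)).toMonoidWithZeroHom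

theorem natHom_apply [Nontrivial (ZMod D)] (χ : DirichletCharacter ℤ D) (n : ℕ) :
    natHom χ n = χ n :=
  rfl

end Character

namespace BinaryQuadraticForm

variable {D n g r : ℕ} {u : BinaryQuadraticForm × ℤ × ℤ}

theorem eval_mul_mul (f : BinaryQuadraticForm) (t x y : ℤ) :
    f.eval (t * x) (t * y) = t ^ 2 * f.eval x y := by
  simp only [eval]
  ring

theorem IsRep.gcd_sq_dvd (hu : IsRep D n u) : Int.gcd u.2.1 u.2.2 ^ 2 ∣ n := by
  obtain ⟨x, hx⟩ := Int.gcd_dvd_left u.2.1 u.2.2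
  obtain ⟨y, hy⟩ := Int.gcd_dvd_right u.2.1 u.2.2
  refine Int.natCast_dvd_natCast.1 ⟨u.1.eval x y, ?_⟩
  rw [← hu.eval_eq, Nat.cast_pow, ← eval_mul_mul, ← hx, ← hy]

theorem card_rep_le_of_gcd_eq (h3 : D ≠ 3) (h4 : D ≠ 4) (hg : g ≠ 0) (hr : r ≠ 0)
    {U : Finset (BinaryQuadraticForm × ℤ × ℤ)} (hU : ∀ u ∈ U, IsRep D (g ^ 2 * r) u)
    (hgcd : ∀ u ∈ U, Int.gcd u.2.1 u.2.2 = g) : U.card ≤ 2 * sqrtCount D r := by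
  classical
  have hg' : (g : ℤ) ≠ 0 := mod_cast hg
  have hquot (u) (hu : u ∈ U) : ∃ v : BinaryQuadraticForm × ℤ × ℤ,
      u = (v.1, g * v.2.1, g * v.2.2) ∧ IsCoprime v.2.1 v.2.2 := by
    obtain ⟨x, y, hxy, hx, hy⟩ := Int.exists_gcd_one (hgcd u hu ▸ Nat.pos_of_ne_zero hg)
    rw [hgcd u hu, mul_comm] at hx hy
    exact ⟨(u.1, x, y), Prod.ext rfl (Prod.ext hx hy), Int.isCoprime_iff_gcd_eq_one.2 hxy⟩
  choose! q hq hcop using hquot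
  have hinj : Set.InjOn q U := fun u hu v hv huv ↦ by rw [hq u hu, hq v hv, huv]
  rw [← Finset.card_image_of_injOn hinj]
  refine card_rep_le_of_isCoprime h3 h4 hr (fun v hv ↦ ?_) fun v hv ↦ ?_
  · obtain ⟨u, hu, rfl⟩ := Finset.mem_image.1 hv
    obtain ⟨hred, hdisc, heval⟩ := hq u hu ▸ hU u hu
    refine ⟨hred, hdisc, mul_left_cancel₀ (pow_ne_zero 2 hg') ?_⟩
    rw [← eval_mul_mul, heval]
    push_cast
    rfl
  · obtain ⟨u, hu, rfl⟩ := Finset.mem_image.1 hv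
    exact hcop u hu

open ArithmeticFunction

theorem card_rep_le_of_gcd_sq_eq [Nontrivial (ZMod D)] {χ : DirichletCharacter ℤ D} {e : ℕ}
    (hχ : EqOneAtSplitPrimes χ) (h3 : D ≠ 3) (h4 : D ≠ 4) (he : e ≠ 0) (hr : r ≠ 0)
    (hcop : (e * r).Coprime D) {U : Finset (BinaryQuadraticForm × ℤ × ℤ)}
    (hU : ∀ u ∈ U, IsRep D (e * r) u) (hgcd : ∀ u ∈ U, Int.gcd u.2.1 u.2.2 ^ 2 = e) :
    (U.card : ℤ) ≤ 2 * (restrictToSquares (natHom χ) e *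
      prodPrimeFactors (fun p ↦ 1 + natHom χ p) r) := by
  by_cases hsq : IsSquare e
  · obtain ⟨g, rfl⟩ := (isSquare_iff_exists_sq e).1 hsq
    have hg : g.Coprime D := hcop.coprime_mul_right.coprime_dvd_left (dvd_pow_self g two_ne_zero)
    have hcard : U.card ≤ 2 * sqrtCount D r :=
      card_rep_le_of_gcd_eq h3 h4 (ne_zero_pow two_ne_zero he) hr hU fun u hu ↦
        Nat.pow_left_injective two_ne_zero (hgcd u hu)
    rw [restrictToSquares_of_isSquare _ hsq, map_pow, natHom_apply,
      dirichletCharacter_sq_eq_one χ hg, one_mul, prodPrimeFactors_apply hr]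
    calc (U.card : ℤ) ≤ 2 * sqrtCount D r := mod_cast hcard
      _ ≤ _ := mul_le_mul_of_nonneg_left
        (sqrtCount_le_prod hχ (Nat.pos_of_ne_zero hr) hcop.coprime_mul_left) zero_le_two
  · have hempty : U = ∅ := Finset.eq_empty_of_forall_notMem fun u hu ↦
      hsq (by rw [← hgcd u hu]; exact IsSquare.sq _)
    rw [restrictToSquares_of_not_isSquare _ hsq, hempty]
    simp

theorem card_rep_le [Nontrivial (ZMod D)] {χ : DirichletCharacter ℤ D}
    (hχ : EqOneAtSplitPrimes χ) (h3 : D ≠ 3) (h4 : D ≠ 4) (hn : n ≠ 0) (hnD : n.Coprime D)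
    {U : Finset (BinaryQuadraticForm × ℤ × ℤ)} (hU : ∀ u ∈ U, IsRep D n u) :
    (U.card : ℤ) ≤ 2 * ∑ d ∈ n.divisors, χ d := by
  classical
  let κ (u : BinaryQuadraticForm × ℤ × ℤ) : ℕ × ℕ :=
    (Int.gcd u.2.1 u.2.2 ^ 2, n / Int.gcd u.2.1 u.2.2 ^ 2)
  have hκ : Set.MapsTo κ U n.divisorsAntidiagonal := fun u hu ↦ Finset.mem_coe.2 <|
    Nat.mem_divisorsAntidiagonal.2 ⟨Nat.mul_div_cancel' (hU u hu).gcd_sq_dvd, hn⟩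
  calc (U.card : ℤ) = ∑ x ∈ n.divisorsAntidiagonal, (Finset.card {u ∈ U | κ u = x} : ℤ) := by
        rw [Finset.card_eq_sum_card_fiberwise hκ, Nat.cast_sum]
    _ ≤ ∑ x ∈ n.divisorsAntidiagonal, 2 * (restrictToSquares (natHom χ) x.1 *
          prodPrimeFactors (fun p ↦ 1 + natHom χ p) x.2) := by
        refine Finset.sum_le_sum fun x hx ↦ ?_
        obtain ⟨rfl, -⟩ := Nat.mem_divisorsAntidiagonal.1 hx
        refine card_rep_le_of_gcd_sq_eq hχ h3 h4 (left_ne_zero_of_mul hn)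
          (right_ne_zero_of_mul hn) hnD (fun u hu ↦ hU u (Finset.mem_filter.1 hu).1) fun u hu ↦ ?_
        exact congrArg Prod.fst (Finset.mem_filter.1 hu).2
    _ = 2 * ∑ d ∈ n.divisors, χ d := by
        rw [← Finset.mul_sum, ← mul_apply, restrictToSquares_mul_prodPrimeFactors,
          coe_mul_zeta_apply]
        rfl

end BinaryQuadraticForm

section CharacterSums

open ArithmeticFunction Finset

variable {D : ℕ} {χ : DirichletCharacter ℤ D}

theorem sum_mul_le_of_antitone {a g : ℕ → ℝ} {B : ℝ} (hg : Antitone g) (hg0 : ∀ i, 0 ≤ g i)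
    (ha : ∀ n, ∑ i ∈ range n, a i ≤ B) (n : ℕ) : ∑ i ∈ range n, a i * g i ≤ B * g 0 := by
  have habel : ∀ n, ∑ i ∈ range n, a i * g i ≤ B * g 0 - (B - ∑ i ∈ range n, a i) * g n := by
    intro n
    induction n with
    | zero => simp
    | succ n ih =>
      have hmono := mul_le_mul_of_nonneg_left (hg n.le_succ) (sub_nonneg.2 (ha (n + 1)))
      calc ∑ i ∈ range (n + 1), a i * g i
          ≤ B * g 0 - (B - ∑ i ∈ range n, a i) * g n + a n * g n := by
            rw [sum_range_succ]
            exact add_le_add_left ih _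
        _ = B * g 0 - (B - ∑ i ∈ range (n + 1), a i) * g n := by rw [sum_range_succ]; ring
        _ ≤ _ := sub_le_sub_left hmono _
  exact (habel n).trans (sub_le_self _ (mul_nonneg (sub_nonneg.2 (ha n)) (hg0 n)))

theorem sum_range_add_natCast_zmod {M : Type*} [AddCommMonoid M] [NeZero D] (f : ZMod D → M)
    (a : ZMod D) : ∑ i ∈ range D, f (a + i) = ∑ x, f x := by
  refine sum_bij' (fun i _ ↦ a + i) (fun x _ ↦ (x - a).val) (fun _ _ ↦ mem_univ _)
    (fun x _ ↦ mem_range.2 (x - a).val_lt) (fun i hi ↦ ?_) (fun x _ ↦ ?_) fun _ _ ↦ rfl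
  · rw [add_sub_cancel_left, ZMod.val_natCast_of_lt (mem_range.1 hi)]
  · rw [ZMod.natCast_zmod_val, add_sub_cancel]

theorem abs_dirichletCharacter_le_one (χ : DirichletCharacter ℤ D) (x : ZMod D) : |χ x| ≤ 1 := by
  by_cases hx : IsUnit x
  · exact (Int.isUnit_iff_abs_eq.1 (hx.map χ)).le
  · simp [χ.map_nonunit hx]

theorem sum_range_dirichletCharacter_le [NeZero D] (hχ : χ ≠ 1) (a : ZMod D) (n : ℕ) :
    ∑ i ∈ range n, χ (a + i) ≤ D := by
  induction n using Nat.strong_induction_on with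
  | _ n ih =>
    rcases lt_or_ge n D with hn | hn
    · calc ∑ i ∈ range n, χ (a + i) ≤ ∑ i ∈ range n, 1 :=
            sum_le_sum fun i _ ↦ le_of_abs_le (abs_dirichletCharacter_le_one χ _)
        _ ≤ D := by simpa using hn.le
    · obtain ⟨m, rfl⟩ := Nat.exists_eq_add_of_le' hn
      have hperiod : ∑ i ∈ range D, χ (a + (m + i : ℕ)) = 0 := by
        simp_rw [Nat.cast_add, ← add_assoc]
        rw [sum_range_add_natCast_zmod, MulChar.sum_eq_zero_of_ne_one hχ]
      rw [sum_range_add, hperiod, add_zero]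
      exact ih m (Nat.lt_add_of_pos_right (NeZero.pos D))

theorem sum_Ioc_dirichletCharacter_mul_le [NeZero D] (hχ : χ ≠ 1) {g : ℕ → ℝ} {K : ℕ}
    (hg : AntitoneOn g (Set.Ioi K)) (hg0 : ∀ d, 0 ≤ g d) (M : ℕ) :
    ∑ d ∈ Ioc K M, χ d * g d ≤ D * g (K + 1) := by
  have hpartial (n : ℕ) : ∑ i ∈ range n, (χ (K + 1 + i : ℕ) : ℝ) ≤ D := by
    have h := sum_range_dirichletCharacter_le hχ (K + 1 : ℕ) n
    simp only [← Nat.cast_add] at h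
    exact_mod_cast h
  have hanti : Antitone fun i ↦ g (K + 1 + i) := fun i j hij ↦
    hg (Set.mem_Ioi.2 (by omega)) (Set.mem_Ioi.2 (by omega)) (by omega)
  rw [← Ico_add_one_add_one_eq_Ioc, sum_Ico_eq_sum_range]
  exact sum_mul_le_of_antitone hanti (fun _ ↦ hg0 _) hpartial _

theorem sum_Ioc_dirichletCharacter_div_le_of_le [NeZero D] (χ : DirichletCharacter ℤ D) {M : ℕ}
    (hM : M ≤ D) : ∑ d ∈ Ioc 0 M, (χ d : ℝ) / d ≤ 1 + Real.log D := by
  calc ∑ d ∈ Ioc 0 M, (χ d : ℝ) / d ≤ ∑ d ∈ Icc 1 D, (d : ℝ)⁻¹ := by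
        refine (sum_le_sum fun d _ ↦ ?_).trans
          (sum_le_sum_of_subset_of_nonneg (Icc_subset_Icc_right hM) fun d _ _ ↦ by positivity)
        rw [← one_div]
        gcongr
        exact_mod_cast le_of_abs_le (abs_dirichletCharacter_le_one χ d)
    _ = harmonic D := by
        rw [harmonic_eq_sum_Icc]
        push_cast
        rfl
    _ ≤ 1 + Real.log D := harmonic_le_one_add_log D

theorem sum_Ioc_dirichletCharacter_div_le [NeZero D] (hχ : χ ≠ 1) (M : ℕ) :
    ∑ d ∈ Ioc 0 M, (χ d : ℝ) / d ≤ 2 + Real.log D := by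
  rcases le_or_gt M D with hM | hM
  · linarith [sum_Ioc_dirichletCharacter_div_le_of_le χ hM]
  have htail : ∑ d ∈ Ioc D M, (χ d : ℝ) / d ≤ 1 := by
    have hanti : AntitoneOn (fun d : ℕ ↦ (d : ℝ)⁻¹) (Set.Ioi D) := fun d hd e _ hde ↦
      inv_anti₀ (Nat.cast_pos.2 (D.zero_le.trans_lt hd)) (Nat.cast_le.2 hde)
    calc ∑ d ∈ Ioc D M, (χ d : ℝ) / d ≤ D * ((D + 1 : ℕ) : ℝ)⁻¹ :=
          sum_Ioc_dirichletCharacter_mul_le hχ hanti (fun d ↦ by positivity) M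
      _ ≤ 1 := by
          rw [← div_eq_mul_inv, div_le_one (by positivity)]
          exact_mod_cast D.le_succ
  rw [← sum_Ioc_consecutive _ D.zero_le hM.le]
  linarith [sum_Ioc_dirichletCharacter_div_le_of_le χ le_rfl]

/-- The number of positive integers up to `Y` that are coprime to `D`. -/
def coprimeCount (D Y : ℕ) : ℕ := {m ∈ Ioc 0 Y | D.Coprime m}.card

theorem coprimeCount_mono (D : ℕ) : Monotone (coprimeCount D) := fun _ _ h ↦
  card_le_card (filter_subset_filter _ (Ioc_subset_Ioc_right h))

theorem coprimeCount_le (D Y : ℕ) : coprimeCount D Y ≤ Y :=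
  (card_filter_le _ _).trans (by simp)

theorem coprimeCount_mul (D q : ℕ) : coprimeCount D (D * q) = D.totient * q := by
  induction q with
  | zero => simp [coprimeCount]
  | succ q ih =>
    rw [mul_add_one, mul_add_one, ← ih, ← Nat.filter_coprime_Ico_eq_totient D (D * q + 1),
      coprimeCount, coprimeCount, ← card_union_of_disjoint, ← filter_union]
    · congr
      ext m
      simp only [mem_Ioc, mem_union, mem_Ico]
      omega
    · exact disjoint_filter_filter (disjoint_left.2 fun m ↦ by simp only [mem_Ioc, mem_Ico]; omega)

theorem abs_coprimeCount_div_sub_le [NeZero D] (X d : ℕ) :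
    |(coprimeCount D (X / d) : ℝ) - D.totient / D * (X / d)| ≤ D.totient := by
  let q := X / d / D
  have hreal : (D.totient : ℝ) / D * (X / d) = D.totient * (X / d / D) := by ring
  have hfloor : q = ⌊(X : ℝ) / d / D⌋₊ := by
    rw [div_div, ← Nat.cast_mul, Nat.floor_div_eq_div, ← Nat.div_div_eq_div_mul]
  have hq_le : (q : ℝ) ≤ X / d / D := hfloor ▸ Nat.floor_le (by positivity)
  have hle_q : (X : ℝ) / d / D ≤ q + 1 := hfloor ▸ (Nat.lt_floor_add_one _).le
  have hlow : D.totient * q ≤ coprimeCount D (X / d) :=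
    (coprimeCount_mul D q).symm.trans_le (coprimeCount_mono D (Nat.mul_div_le _ _))
  have hupp : coprimeCount D (X / d) ≤ D.totient * (q + 1) :=
    (coprimeCount_mono D (Nat.lt_mul_div_succ _ (NeZero.pos D)).le).trans_eq
      (coprimeCount_mul D (q + 1))
  have hlow' : (D.totient * q : ℝ) ≤ coprimeCount D (X / d) := mod_cast hlow
  have hupp' : (coprimeCount D (X / d) : ℝ) ≤ D.totient * (q + 1) := mod_cast hupp
  have hφq := mul_le_mul_of_nonneg_left hq_le (Nat.cast_nonneg (α := ℝ) D.totient)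
  have hφq' := mul_le_mul_of_nonneg_left hle_q (Nat.cast_nonneg (α := ℝ) D.totient)
  rw [hreal, abs_le]
  constructor <;> linarith

theorem natHom_one_apply [Nontrivial (ZMod D)] (n : ℕ) :
    natHom (1 : DirichletCharacter ℤ D) n = if D.Coprime n then 1 else 0 := by
  rw [natHom_apply]
  split_ifs with h
  · exact MulChar.one_apply ((ZMod.isUnit_iff_coprime n D).2 h.symm)
  · exact MulChar.map_nonunit _ fun hn ↦ h ((ZMod.isUnit_iff_coprime n D).1 hn).symm

theorem natHom_mul_natHom_one [Nontrivial (ZMod D)] (χ : DirichletCharacter ℤ D) (n : ℕ) :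
    natHom χ n * natHom (1 : DirichletCharacter ℤ D) n = natHom χ n := by
  rw [natHom_apply, natHom_apply, ← MulChar.mul_apply, mul_one]

theorem completelyMultiplicative_mul_natHom_one_apply [Nontrivial (ZMod D)]
    (χ : DirichletCharacter ℤ D) (n : ℕ) :
    (completelyMultiplicative (natHom χ) *
        completelyMultiplicative (natHom (1 : DirichletCharacter ℤ D))) n =
      if D.Coprime n then ∑ d ∈ n.divisors, χ d else 0 := by
  rw [mul_apply, ← mul_boole, ← natHom_one_apply, sum_mul,
    ← Nat.sum_divisorsAntidiagonal (fun d _ ↦ χ d * natHom (1 : DirichletCharacter ℤ D) n)]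
  refine sum_congr rfl fun x hx ↦ ?_
  rw [← (Nat.mem_divisorsAntidiagonal.1 hx).1, map_mul, ← mul_assoc, ← natHom_apply,
    natHom_mul_natHom_one]
  rfl

theorem sum_sum_divisors_dirichletCharacter [Nontrivial (ZMod D)] (χ : DirichletCharacter ℤ D)
    (X : ℕ) : ∑ n ∈ Ioc 0 X with D.Coprime n, ∑ d ∈ n.divisors, χ d =
      ∑ d ∈ Ioc 0 X, χ d * coprimeCount D (X / d) := by
  simp only [sum_filter, ← completelyMultiplicative_mul_natHom_one_apply]
  rw [sum_Ioc_mul_eq_sum_sum]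
  refine sum_congr rfl fun d _ ↦ congrArg (χ d * ·) ?_
  rw [coprimeCount, card_filter]
  push_cast
  exact sum_congr rfl fun m _ ↦ natHom_one_apply m

theorem dirichletCharacter_mul_coprimeCount_le [NeZero D] (χ : DirichletCharacter ℤ D) (M d : ℕ) :
    (χ d * coprimeCount D (M ^ 2 / d) : ℝ) ≤ D.totient / D * M ^ 2 * (χ d / d) + D := by
  have hχd : |(χ d : ℝ)| ≤ 1 := mod_cast abs_dirichletCharacter_le_one χ d
  set err : ℝ := coprimeCount D (M ^ 2 / d) - D.totient / D * ((M ^ 2 : ℕ) / d) with herr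
  have herr_le : |err| ≤ D :=
    (abs_coprimeCount_div_sub_le (M ^ 2) d).trans (Nat.cast_le.2 D.totient_le)
  have hmul_le : χ d * err ≤ D := calc
    χ d * err ≤ |(χ d : ℝ)| * |err| := (le_abs_self _).trans_eq (abs_mul _ _)
    _ ≤ 1 * D := mul_le_mul hχd herr_le (abs_nonneg _) zero_le_one
    _ = D := one_mul _
  calc (χ d * coprimeCount D (M ^ 2 / d) : ℝ)
      = D.totient / D * M ^ 2 * (χ d / d) + χ d * err := by rw [herr]; push_cast; ring
    _ ≤ _ := by gcongr

theorem sum_sum_divisors_dirichletCharacter_le [NeZero D] [Nontrivial (ZMod D)] (hχ : χ ≠ 1)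
    (M : ℕ) : ((∑ n ∈ Ioc 0 (M ^ 2) with D.Coprime n, ∑ d ∈ n.divisors, χ d : ℤ) : ℝ) ≤
      D.totient / D * M ^ 2 * (2 + Real.log D) + 2 * D * M := by
  have hsmall : ∑ d ∈ Ioc 0 M, (χ d * coprimeCount D (M ^ 2 / d) : ℝ) ≤
      D.totient / D * M ^ 2 * (2 + Real.log D) + D * M := by
    calc _ ≤ ∑ d ∈ Ioc 0 M, (D.totient / D * M ^ 2 * ((χ d : ℝ) / d) + D) :=
          sum_le_sum fun d _ ↦ dirichletCharacter_mul_coprimeCount_le χ M d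
      _ = D.totient / D * M ^ 2 * ∑ d ∈ Ioc 0 M, (χ d : ℝ) / d + D * M := by
          rw [sum_add_distrib, ← mul_sum, sum_const, Nat.card_Ioc, Nat.sub_zero, nsmul_eq_mul,
            mul_comm (M : ℝ)]
      _ ≤ _ := by
          gcongr
          exact sum_Ioc_dirichletCharacter_div_le hχ M
  have hlarge : ∑ d ∈ Ioc M (M ^ 2), (χ d * coprimeCount D (M ^ 2 / d) : ℝ) ≤ D * M := by
    have hanti : AntitoneOn (fun d ↦ (coprimeCount D (M ^ 2 / d) : ℝ)) (Set.Ioi M) :=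
      fun d hd e _ hde ↦ Nat.cast_le.2 <| coprimeCount_mono D <|
        Nat.div_le_div_left hde (M.zero_le.trans_lt hd)
    have hM : coprimeCount D (M ^ 2 / (M + 1)) ≤ M :=
      (coprimeCount_le D _).trans (Nat.div_le_of_le_mul (by nlinarith))
    calc _ ≤ (D * coprimeCount D (M ^ 2 / (M + 1)) : ℝ) :=
          sum_Ioc_dirichletCharacter_mul_le hχ hanti (fun d ↦ Nat.cast_nonneg _) (M ^ 2)
      _ ≤ _ := by gcongr
  rw [sum_sum_divisors_dirichletCharacter, ← sum_Ioc_consecutive _ M.zero_le (by nlinarith)]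
  push_cast
  linarith

end CharacterSums

namespace BinaryQuadraticForm

variable {D : ℕ} {f : BinaryQuadraticForm}

theorem isCoprime_natCast_iff_forall_prime {n : ℤ} :
    IsCoprime n D ↔ ∀ p : ℕ, p.Prime → p ∣ D → ¬ (p : ℤ) ∣ n := by
  rw [isCoprime_comm, Int.isCoprime_iff_gcd_eq_one]
  refine ⟨fun h p hp hpD hpn ↦ Nat.not_coprime_of_dvd_of_dvd hp.one_lt hpD
    (Int.natCast_dvd.1 hpn) h, fun h ↦ Nat.coprime_of_dvd fun p hp hpD hpn ↦ ?_⟩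
  exact h p hp hpD (Int.natCast_dvd.2 hpn)

theorem exists_isCoprime_eval (hD : D ≠ 0)
    (hf : ∀ d : ℤ, d ∣ f.a → d ∣ f.b → d ∣ f.c → IsUnit d) (hdisc : f.disc = -D) :
    ∃ x y : ℤ, IsCoprime x y ∧ IsCoprime (f.eval x y) D := by
  classical
  let q : ℕ := ∏ l ∈ {l ∈ D.primeFactors | ¬ ((l : ℕ) : ℤ) ∣ f.a}, l
  have hq {p : ℕ} (hp : p.Prime) (hpD : p ∣ D) : (p : ℤ) ∣ q ↔ ¬ (p : ℤ) ∣ f.a := by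
    rw [Int.natCast_dvd_natCast, hp.prime.dvd_finsetProd_iff]
    simp only [Finset.mem_filter]
    refine ⟨fun ⟨l, ⟨hl, hla⟩, hpl⟩ ↦ ?_, fun h ↦ ⟨p, ⟨hp.mem_primeFactors hpD hD, h⟩, dvd_rfl⟩⟩
    rwa [(Nat.prime_dvd_prime_iff_eq hp (Nat.prime_of_mem_primeFactors hl)).1 hpl]
  refine ⟨f.a, q, ?_, isCoprime_natCast_iff_forall_prime.2 fun p hp hpD hpf ↦ ?_⟩
  · rw [Nat.cast_prod]
    refine IsCoprime.prod_right fun l hl ↦ ?_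
    obtain ⟨hlD, hla⟩ := Finset.mem_filter.1 hl
    exact ((Nat.prime_iff_prime_int.1 (Nat.prime_of_mem_primeFactors hlD)).coprime_iff_not_dvd.2
      hla).symm
  · have hpZ := Nat.prime_iff_prime_int.1 hp
    by_cases hpa : (p : ℤ) ∣ f.a
    · have hpb : (p : ℤ) ∣ f.b := hpZ.dvd_of_dvd_pow (n := 2) <| by
        rw [show f.b ^ 2 = 4 * f.a * f.c - D by rw [← neg_eq_iff_eq_neg.2 hdisc, disc]; ring]
        exact ((hpa.mul_left 4).mul_right f.c).sub (Int.natCast_dvd_natCast.2 hpD)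
      have hpc : (p : ℤ) ∣ f.c * q ^ 2 :=
        (dvd_add_right (((hpa.mul_right _).add ((hpb.mul_right _).mul_right _)))).1 hpf
      rcases hpZ.dvd_or_dvd hpc with h | h
      · exact hpZ.not_isUnit (hf p hpa hpb h)
      · exact (hq hp hpD).1 (hpZ.dvd_of_dvd_pow h) hpa
    · have hpq := (hq hp hpD).2 hpa
      have hpa3 : (p : ℤ) ∣ f.a * f.a ^ 2 := by
        rw [eval, add_assoc] at hpf
        exact (dvd_add_left ((hpq.mul_left _).add ((dvd_pow hpq two_ne_zero).mul_left _))).1 hpf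
      exact hpa ((hpZ.dvd_or_dvd hpa3).elim id hpZ.dvd_of_dvd_pow)

/-- Modulo every prime divisor of `D`, the number `a f(x, y)` is the square of `a x + s y`. -/
def IsSqModPrimes (D : ℕ) (f : BinaryQuadraticForm) (s : ℤ) : Prop :=
  ∀ (x y : ℤ) (p : ℕ), p.Prime → p ∣ D → (p : ℤ) ∣ f.a * f.eval x y - (f.a * x + s * y) ^ 2

theorem exists_isSqModPrimes_of_even (hdisc : f.disc = -D) (hb : Even f.b) :
    ∃ s, IsSqModPrimes D f s := by
  rw [disc] at hdisc
  obtain ⟨h, hb⟩ := hb.exists_two_nsmul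
  rw [nsmul_eq_mul, Nat.cast_ofNat] at hb
  obtain ⟨k, rfl⟩ : 4 ∣ D := by
    rw [← Int.natCast_dvd_natCast]
    exact ⟨f.a * f.c - h ^ 2, by push_cast; linear_combination hdisc - (f.b + 2 * h) * hb⟩
  have hac : f.a * f.c = h ^ 2 + k := by
    push_cast at hdisc
    refine mul_left_cancel₀ four_ne_zero ?_
    linear_combination (f.b + 2 * h) * hb - hdisc
  refine ⟨h + k, fun x y p hp hpD ↦ ?_⟩
  have hsub : f.a * f.eval x y - (f.a * x + (h + k) * y) ^ 2 =
      k * (1 - k) * y ^ 2 - 2 * k * ((f.a * x + h * y) * y) := by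
    rw [eval]
    linear_combination y ^ 2 * hac + f.a * x * y * hb
  rw [hsub]
  rcases hp.dvd_mul.1 hpD with hp4 | hpk
  · obtain rfl := (Nat.prime_dvd_prime_iff_eq hp Nat.prime_two).1
      (hp.dvd_of_dvd_pow (show p ∣ 2 ^ 2 from hp4))
    have hk : (2 : ℤ) ∣ k * (1 - k) := by
      rcases (k : ℤ).even_or_odd with hk | hk
      · exact hk.two_dvd.mul_right _
      · exact (odd_one.sub_odd hk).two_dvd.mul_left _
    exact (hk.mul_right _).sub ((dvd_mul_right _ _).mul_right _)
  · have hpk' := Int.natCast_dvd_natCast.2 hpk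
    exact ((hpk'.mul_right _).mul_right _).sub ((hpk'.mul_left _).mul_right _)

theorem exists_isSqModPrimes_of_odd (hdisc : f.disc = -D) (hb : Odd f.b) :
    ∃ s, IsSqModPrimes D f s := by
  rw [disc] at hdisc
  obtain ⟨h, hb⟩ := hb
  obtain ⟨k, rfl⟩ : Odd D := by
    rw [← Int.odd_coe_nat, ← neg_eq_iff_eq_neg.2 hdisc]
    exact ⟨2 * (f.a * f.c - h ^ 2 - h) - 1, by rw [hb]; ring⟩
  refine ⟨f.b * (k + 1), fun x y p _ hpD ↦ ?_⟩
  have hp4 : IsCoprime (p : ℤ) 4 :=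
    Nat.isCoprime_iff_coprime.2
      (((odd_two_mul_add_one k).of_dvd_nat hpD).coprime_two_right.pow_right 2)
  refine hp4.dvd_of_dvd_mul_left ((Int.natCast_dvd_natCast.2 hpD).trans
    ⟨y ^ 2 - 2 * (2 * f.a * x + f.b * y) * f.b * y - (2 * k + 1) * f.b ^ 2 * y ^ 2, ?_⟩)
  rw [eval]
  push_cast at hdisc ⊢
  linear_combination -y ^ 2 * hdisc

/- `4 a f(x, y) = (2 a x + b y) ^ 2 + D y ^ 2`, and the factor `4` disappears when `b` is
replaced by the even number `b + b D` for odd `D` and `b + D / 2` for even `D`. -/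
theorem exists_isSqModPrimes (hdisc : f.disc = -D) : ∃ s, IsSqModPrimes D f s :=
  f.b.even_or_odd.elim (exists_isSqModPrimes_of_even hdisc) (exists_isSqModPrimes_of_odd hdisc)

theorem eval_comp (f : BinaryQuadraticForm) (γ : SL(2, ℤ)) (x y : ℤ) :
    (f.comp γ).eval x y = f.eval (γ 0 0 * x + γ 0 1 * y) (γ 1 0 * x + γ 1 1 * y) := by
  simp only [comp, eval]
  ring

/-- A set of representatives of residue classes of `ℤ × ℤ` modulo `D` on which the values of `f`
are coprime to `D`. -/
structure IsCoprimeSystem (D : ℕ) (f : BinaryQuadraticForm) (V : Finset (ℤ × ℤ)) : Prop where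
  eq_of_dvd : ∀ v ∈ V, ∀ w ∈ V, (D : ℤ) ∣ v.1 - w.1 → (D : ℤ) ∣ v.2 - w.2 → v = w
  isCoprime : ∀ v ∈ V, IsCoprime (f.eval v.1 v.2) D

theorem IsSqModPrimes.isCoprime_eval {s x y : ℤ} (hs : IsSqModPrimes D f s)
    (hL : IsCoprime (f.a * x + s * y) D) : IsCoprime (f.eval x y) D := by
  refine isCoprime_natCast_iff_forall_prime.2 fun p hp hpD hpf ↦ ?_
  have hsq := (dvd_sub_right (hpf.mul_left f.a)).1 (hs x y p hp hpD)
  exact isCoprime_natCast_iff_forall_prime.1 hL p hp hpD (Int.Prime.dvd_pow' hp hsq)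

theorem eq_of_natCast_dvd_sub {m n : ℕ} (hm : m < D) (hn : n < D) (h : (D : ℤ) ∣ m - n) :
    m = n :=
  (((Nat.modEq_iff_dvd.2 h).eq_of_lt_of_lt hn hm)).symm

theorem exists_isCoprimeSystem_of_isCoprime_a (hdisc : f.disc = -D) (ha : IsCoprime f.a D) :
    ∃ V, IsCoprimeSystem D f V ∧ V.card = D * D.totient := by
  classical
  obtain ⟨s, hs⟩ := exists_isSqModPrimes hdisc
  obtain ⟨a', e, ha'⟩ := id ha
  let W : Finset (ℕ × ℕ) := Finset.range D ×ˢ {r ∈ Finset.range D | D.Coprime r}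
  let v (w : ℕ × ℕ) : ℤ × ℤ := (a' * (w.2 - s * w.1), w.1)
  have hinj (w) (hw : w ∈ W) (w') (hw' : w' ∈ W) (h₁ : (D : ℤ) ∣ (v w).1 - (v w').1)
      (h₂ : (D : ℤ) ∣ (v w).2 - (v w').2) : w = w' := by
    simp only [W, Finset.mem_product, Finset.mem_filter, Finset.mem_range] at hw hw'
    have hy : w.1 = w'.1 := eq_of_natCast_dvd_sub hw.1 hw'.1 h₂
    have hr : (D : ℤ) ∣ a' * (w.2 - w'.2) := by
      convert h₁ using 1
      simp only [v, hy]
      ring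
    have ha'D : IsCoprime (D : ℤ) a' := ⟨e, f.a, by linarith⟩
    exact Prod.ext hy (eq_of_natCast_dvd_sub hw.2.1 hw'.2.1 (ha'D.dvd_of_dvd_mul_left hr))
  refine ⟨W.image v, ⟨?_, ?_⟩, ?_⟩
  · simp only [Finset.forall_mem_image]
    exact fun w hw w' hw' h₁ h₂ ↦ congrArg v (hinj w hw w' hw' h₁ h₂)
  · simp only [Finset.forall_mem_image]
    refine fun w hw ↦ hs.isCoprime_eval ?_
    have hw2 : IsCoprime (w.2 : ℤ) D :=
      Nat.isCoprime_iff_coprime.2 (Finset.mem_filter.1 (Finset.mem_product.1 hw).2).2.symm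
    have hL : f.a * (v w).1 + s * (v w).2 = w.2 + (-e * (w.2 - s * w.1)) * D := by
      simp only [v]
      linear_combination (w.2 - s * w.1) * ha'
    rw [hL]
    exact hw2.add_mul_right_left _
  · rw [Finset.card_image_of_injOn fun w hw w' hw' h ↦ hinj w hw w' hw' (by simp [h]) (by simp [h]),
      Finset.card_product, Finset.card_range, Nat.totient_eq_card_coprime]

theorem IsCoprimeSystem.exists_of_comp {γ : SL(2, ℤ)} {V : Finset (ℤ × ℤ)}
    (hV : IsCoprimeSystem D (f.comp γ) V) : ∃ W, IsCoprimeSystem D f W ∧ W.card = V.card := by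
  classical
  let φ (v : ℤ × ℤ) : ℤ × ℤ := (γ 0 0 * v.1 + γ 0 1 * v.2, γ 1 0 * v.1 + γ 1 1 * v.2)
  have hinj (v) (hv : v ∈ V) (w) (hw : w ∈ V) (h₁ : (D : ℤ) ∣ (φ v).1 - (φ w).1)
      (h₂ : (D : ℤ) ∣ (φ v).2 - (φ w).2) : v = w := by
    refine hV.eq_of_dvd v hv w hw ?_ ?_
    · rw [show v.1 - w.1 = γ 1 1 * ((φ v).1 - (φ w).1) - γ 0 1 * ((φ v).2 - (φ w).2) by
        linear_combination -(v.1 - w.1) * det_eq_one γ]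
      exact (h₁.mul_left _).sub (h₂.mul_left _)
    · rw [show v.2 - w.2 = γ 0 0 * ((φ v).2 - (φ w).2) - γ 1 0 * ((φ v).1 - (φ w).1) by
        linear_combination -(v.2 - w.2) * det_eq_one γ]
      exact (h₂.mul_left _).sub (h₁.mul_left _)
  refine ⟨V.image φ, ⟨?_, ?_⟩, Finset.card_image_of_injOn fun v hv w hw h ↦
    hinj v hv w hw (by simp [h]) (by simp [h])⟩
  · simp only [Finset.forall_mem_image]
    exact fun v hv w hw h₁ h₂ ↦ congrArg φ (hinj v hv w hw h₁ h₂)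
  · simp only [Finset.forall_mem_image]
    exact fun v hv ↦ eval_comp f γ v.1 v.2 ▸ hV.isCoprime v hv

theorem exists_isCoprimeSystem (hD : D ≠ 0)
    (hf : ∀ d : ℤ, d ∣ f.a → d ∣ f.b → d ∣ f.c → IsUnit d) (hdisc : f.disc = -D) :
    ∃ V, IsCoprimeSystem D f V ∧ V.card = D * D.totient := by
  obtain ⟨x, y, hxy, hcop⟩ := exists_isCoprime_eval hD hf hdisc
  obtain ⟨γ, rfl, rfl⟩ := hxy.exists_SL2_col 0
  obtain ⟨V, hV, hcard⟩ := exists_isCoprimeSystem_of_isCoprime_a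
    ((disc_comp f γ).trans hdisc) hcop
  obtain ⟨W, hW, hWV⟩ := hV.exists_of_comp
  exact ⟨W, hW, hWV.trans hcard⟩

end BinaryQuadraticForm

section PlaneLattice

open Filter MeasureTheory Module Topology

variable (v : Basis (Fin 2) ℝ ℂ)

theorem covolume_span_range_eq_abs_det :
    ZLattice.covolume (Submodule.span ℤ (Set.range v)) = |Complex.basisOneI.det v| := by
  have hone : volume.real (ZSpan.fundamentalDomain Complex.basisOneI) = 1 := by
    rw [measureReal_def, measure_congr (ZSpan.fundamentalDomain_ae_parallelepiped _ _),
      ← Complex.toBasis_orthonormalBasisOneI, OrthonormalBasis.coe_toBasis,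
      OrthonormalBasis.volume_parallelepiped, ENNReal.toReal_one]
  rw [ZLattice.covolume_eq_det_mul_measureReal _ volume (v.restrictScalars ℤ)
    Complex.basisOneI, hone,
    mul_one]
  congr 2
  exact funext fun i ↦ v.restrictScalars_apply ℤ i

theorem tendsto_card_norm_sq_le_inter_span_div :
    Tendsto (fun c : ℝ ↦
      Nat.card ({x : ℂ | ‖x‖ ^ 2 ≤ c} ∩ Submodule.span ℤ (Set.range v) : Set ℂ) / c)
      atTop (𝓝 (Real.pi / |Complex.basisOneI.det v|)) := by
  have hball : {x : ℂ | x ∈ Set.univ ∧ ‖x‖ ^ 2 ≤ 1} = Metric.closedBall 0 1 := by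
    ext x
    simp [sq_le_one_iff_abs_le_one]
  have h := ZLattice.covolume.tendsto_card_le_div' (Submodule.span ℤ (Set.range v))
    (X := Set.univ) (F := fun x ↦ ‖x‖ ^ 2) (fun _ _ _ _ ↦ trivial)
    (fun x r _ ↦ by rw [norm_smul, mul_pow, Real.norm_eq_abs, sq_abs, Complex.finrank_real_complex])
    (hball ▸ Metric.isBounded_closedBall) (hball ▸ Metric.isClosed_closedBall.measurableSet)
    (hball ▸ (convex_closedBall _ _).addHaar_frontier volume)
  rw [hball, measureReal_def, Complex.volume_closedBall, covolume_span_range_eq_abs_det] at h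
  simpa using h

end PlaneLattice

namespace BinaryQuadraticForm

section LatticePoints

open Filter Module Topology

variable {f : BinaryQuadraticForm}

/-- A basis of a lattice in `ℂ` on which the squared norm is the given form, provided that the
form is positive definite. -/
noncomputable def latticeVectors (f : BinaryQuadraticForm) : Fin 2 → ℂ :=
  ![⟨√f.a, 0⟩, ⟨f.b / (2 * √f.a), √(-f.disc) / (2 * √f.a)⟩]

/-- The point with integral coordinates `z` of the lattice attached to a form. -/
noncomputable def latticePoint (f : BinaryQuadraticForm) (z : ℤ × ℤ) : ℂ :=
  z.1 • f.latticeVectors 0 + z.2 • f.latticeVectors 1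

theorem latticePoint_smul_add (f : BinaryQuadraticForm) (n : ℤ) (z w : ℤ × ℤ) :
    f.latticePoint (n • z + w) = n • f.latticePoint z + f.latticePoint w := by
  simp only [latticePoint, Prod.fst_add, Prod.snd_add, Prod.smul_fst, Prod.smul_snd, smul_eq_mul]
  module

theorem norm_latticePoint_sq (ha : 0 < f.a) (hdisc : f.disc < 0) (z : ℤ × ℤ) :
    ‖f.latticePoint z‖ ^ 2 = f.eval z.1 z.2 := by
  have hsa : √(f.a : ℝ) ^ 2 = f.a := Real.sq_sqrt (Int.cast_nonneg ha.le)
  have hsd : √(-(f.disc : ℝ)) ^ 2 = 4 * f.a * f.c - f.b ^ 2 := by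
    rw [Real.sq_sqrt (by exact_mod_cast (neg_pos.2 hdisc).le), disc]
    push_cast
    ring
  have hsa0 : √(f.a : ℝ) ≠ 0 := (Real.sqrt_pos.2 (Int.cast_pos.2 ha)).ne'
  have hre : (f.latticePoint z).re = z.1 * √f.a + z.2 * (f.b / (2 * √f.a)) := by
    simp [latticePoint, latticeVectors]
  have him : (f.latticePoint z).im = z.2 * (√(-f.disc) / (2 * √f.a)) := by
    simp [latticePoint, latticeVectors]
  rw [← Complex.normSq_eq_norm_sq, Complex.normSq_apply, hre, him, eval]
  push_cast
  field_simp
  linear_combination z.2 ^ 2 * hsd + (4 * z.1 ^ 2 * (√f.a ^ 2 + f.a) +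
    4 * z.1 * z.2 * f.b - 4 * (f.a * z.1 ^ 2 + f.b * z.1 * z.2 + f.c * z.2 ^ 2)) * hsa

theorem det_latticeVectors (ha : 0 < f.a) :
    Complex.basisOneI.det f.latticeVectors = √(-f.disc) / 2 := by
  have hsa : √(f.a : ℝ) ≠ 0 := (Real.sqrt_pos.2 (Int.cast_pos.2 ha)).ne'
  rw [Basis.det_apply, Matrix.det_fin_two]
  simp only [Basis.toMatrix_apply, latticeVectors, Complex.coe_basisOneI_repr, Matrix.cons_val_zero,
    Matrix.cons_val_one, Matrix.cons_val_fin_one, mul_zero, sub_zero]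
  field_simp

theorem exists_basis_eq_latticeVectors (ha : 0 < f.a) (hdisc : f.disc < 0) :
    ∃ v : Basis (Fin 2) ℝ ℂ, ⇑v = f.latticeVectors := by
  have hdet : IsUnit (Complex.basisOneI.det f.latticeVectors) := by
    rw [det_latticeVectors ha, isUnit_iff_ne_zero]
    have : (0 : ℝ) < -f.disc := by exact_mod_cast neg_pos.2 hdisc
    positivity
  obtain ⟨hli, hspan⟩ := (Basis.is_basis_iff_det Complex.basisOneI).2 hdet
  exact ⟨Basis.mk hli hspan.ge, Basis.coe_mk _ _⟩

theorem image_latticePoint (ha : 0 < f.a) (hdisc : f.disc < 0) (c : ℝ) :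
    f.latticePoint '' {z | f.eval z.1 z.2 ≤ c} =
      {x : ℂ | ‖x‖ ^ 2 ≤ c} ∩ Submodule.span ℤ (Set.range f.latticeVectors) := by
  ext x
  simp only [Set.mem_image, Set.mem_inter_iff, Set.mem_ofPred_eq, SetLike.mem_coe,
    Submodule.mem_span_range_iff_exists_fun, Fin.sum_univ_two, ← norm_latticePoint_sq ha hdisc]
  constructor
  · rintro ⟨z, hz, rfl⟩
    exact ⟨hz, ![z.1, z.2], rfl⟩
  · rintro ⟨hx, z, rfl⟩
    exact ⟨(z 0, z 1), hx, rfl⟩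

theorem latticePoint_injective (ha : 0 < f.a) (hdisc : f.disc < 0) :
    Function.Injective f.latticePoint := by
  obtain ⟨v, hv⟩ := exists_basis_eq_latticeVectors ha hdisc
  have hli : LinearIndependent ℤ f.latticeVectors := hv ▸ v.linearIndependent.restrict_scalars' ℤ
  exact fun z w h ↦ Prod.ext_iff.2 (hli.eq_of_pair h)

theorem finite_eval_le (ha : 0 < f.a) (hdisc : f.disc < 0) (c : ℝ) :
    {z : ℤ × ℤ | f.eval z.1 z.2 ≤ c}.Finite := by
  obtain ⟨v, hv⟩ := exists_basis_eq_latticeVectors ha hdisc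
  refine Set.Finite.of_finite_image ?_ (latticePoint_injective ha hdisc).injOn
  rw [image_latticePoint ha hdisc, ← hv]
  refine ZSpan.setFinite_inter v
    ((Metric.isBounded_closedBall (x := 0) (r := √c)).subset fun x hx ↦ ?_)
  simpa using Real.le_sqrt_of_sq_le hx

theorem tendsto_card_eval_le_div (ha : 0 < f.a) (hdisc : f.disc < 0) :
    Tendsto (fun c : ℝ ↦ Nat.card {z : ℤ × ℤ | f.eval z.1 z.2 ≤ c} / c) atTop
      (𝓝 (2 * Real.pi / √(-f.disc))) := by
  obtain ⟨v, hv⟩ := exists_basis_eq_latticeVectors ha hdisc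
  have h := tendsto_card_norm_sq_le_inter_span_div v
  rw [hv, det_latticeVectors ha, abs_of_nonneg (by positivity), div_div_eq_mul_div, mul_comm] at h
  refine h.congr fun c ↦ ?_
  rw [← image_latticePoint ha hdisc, Nat.card_image_of_injective (latticePoint_injective ha hdisc)]

end LatticePoints

section Counting

open Filter Finset Topology

variable {D : ℕ} {f : BinaryQuadraticForm} {S : Finset BinaryQuadraticForm}
  {χ : DirichletCharacter ℤ D}

/-- The points at which the values of `f` are at most `c` and coprime to `D`. -/
def coprimePoints (D : ℕ) (f : BinaryQuadraticForm) (c : ℝ) : Set (ℤ × ℤ) :=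
  {z | f.eval z.1 z.2 ≤ c ∧ IsCoprime (f.eval z.1 z.2) D}

theorem finite_coprimePoints (ha : 0 < f.a) (hdisc : f.disc < 0) (c : ℝ) :
    (coprimePoints D f c).Finite :=
  (finite_eval_le ha hdisc c).subset fun _ hz ↦ hz.1

theorem isCoprime_eval_smul_add {v : ℤ × ℤ} (hv : IsCoprime (f.eval v.1 v.2) D) (z : ℤ × ℤ) :
    IsCoprime (f.eval ((D : ℤ) • z + v).1 ((D : ℤ) • z + v).2) D := by
  have heval : f.eval ((D : ℤ) • z + v).1 ((D : ℤ) • z + v).2 = f.eval v.1 v.2 +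
      D * (D * f.eval z.1 z.2 + 2 * f.a * z.1 * v.1 + f.b * (z.1 * v.2 + z.2 * v.1) +
        2 * f.c * z.2 * v.2) := by
    simp only [eval, Prod.fst_add, Prod.snd_add, Prod.smul_fst, Prod.smul_snd, smul_eq_mul]
    ring
  exact heval ▸ hv.add_mul_left_left _

theorem IsCoprimeSystem.smul_add_injOn {V : Finset (ℤ × ℤ)} (hV : IsCoprimeSystem D f V)
    (hD : D ≠ 0) (s : Set (ℤ × ℤ)) :
    Set.InjOn (fun p : (ℤ × ℤ) × (ℤ × ℤ) ↦ (D : ℤ) • p.2 + p.1) ((V : Set (ℤ × ℤ)) ×ˢ s) := by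
  rintro ⟨v, z⟩ ⟨hv, _⟩ ⟨w, y⟩ ⟨hw, _⟩ h
  have h₁ : v - w = (D : ℤ) • (y - z) := by
    rw [smul_sub, sub_eq_sub_iff_add_eq_add]
    exact (add_comm _ _).trans h
  obtain rfl : v = w := hV.eq_of_dvd v hv w hw
    ⟨y.1 - z.1, congrArg Prod.fst h₁⟩ ⟨y.2 - z.2, congrArg Prod.snd h₁⟩
  rw [sub_self, eq_comm, smul_eq_zero_iff_right (by exact_mod_cast hD), sub_eq_zero] at h₁
  rw [h₁]

/- The points `D z + v`, with `v` in a coprime system and `z` in the ellipse `f ≤ k ^ 2`, are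
pairwise distinct and lie in the ellipse `f ≤ (D (k + C)) ^ 2` by the triangle inequality. -/
theorem IsCoprimeSystem.eventually_card_mul_card_le {V : Finset (ℤ × ℤ)}
    (hV : IsCoprimeSystem D f V) (hD : D ≠ 0) (ha : 0 < f.a) (hdisc : f.disc < 0) :
    ∀ᶠ C : ℕ in atTop, ∀ k : ℕ, V.card * Nat.card {z : ℤ × ℤ | f.eval z.1 z.2 ≤ (k : ℝ) ^ 2} ≤
      Nat.card (coprimePoints D f ((D * (k + C) : ℕ) ^ 2)) := by
  have hnorm : ∀ᶠ C : ℕ in atTop, ∀ v ∈ V, ‖f.latticePoint v‖ ≤ C :=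
    (Finset.eventually_all V).2 fun v _ ↦
      (eventually_ge_atTop ⌈‖f.latticePoint v‖⌉₊).mono fun C hC ↦ Nat.ceil_le.1 hC
  filter_upwards [hnorm] with C hC k
  rw [Nat.card_coe_set_eq, Nat.card_coe_set_eq, ← Set.ncard_coe_finset, ← Set.ncard_prod]
  refine Set.ncard_le_ncard_of_injOn (fun p ↦ (D : ℤ) • p.2 + p.1) ?_
    (hV.smul_add_injOn hD _) (finite_coprimePoints ha hdisc _)
  rintro ⟨v, z⟩ ⟨hv, hz⟩
  refine ⟨?_, isCoprime_eval_smul_add (hV.isCoprime v hv) z⟩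
  have hzk : ‖f.latticePoint z‖ ≤ k := by
    refine le_of_sq_le_sq ?_ k.cast_nonneg
    rwa [norm_latticePoint_sq ha hdisc]
  have hD1 : (1 : ℝ) ≤ D := by exact_mod_cast Nat.one_le_iff_ne_zero.2 hD
  rw [← norm_latticePoint_sq ha hdisc, latticePoint_smul_add]
  gcongr
  calc ‖(D : ℤ) • f.latticePoint z + f.latticePoint v‖
      ≤ D * ‖f.latticePoint z‖ + ‖f.latticePoint v‖ := by
        refine (norm_add_le _ _).trans_eq ?_
        rw [natCast_zsmul, nsmul_eq_mul, norm_mul, Complex.norm_natCast]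
    _ ≤ D * k + D * C := by
        gcongr
        exact (hC v hv).trans (le_mul_of_one_le_left C.cast_nonneg hD1)
    _ = (D * (k + C) : ℕ) := by push_cast; ring

theorem natCast_natAbs_eval (ha : 0 < f.a) (hdisc : f.disc < 0) (z : ℤ × ℤ) :
    ((f.eval z.1 z.2).natAbs : ℤ) = f.eval z.1 z.2 := by
  have h : (0 : ℝ) ≤ f.eval z.1 z.2 := norm_latticePoint_sq ha hdisc z ▸ sq_nonneg _
  exact Int.natAbs_of_nonneg (Int.cast_nonneg_iff.1 h)

theorem natAbs_eval_mem_Ioc_filter (ha : 0 < f.a) (hdisc : f.disc < 0) (hD : D ≠ 1) {M : ℕ}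
    {z : ℤ × ℤ} (hz : z ∈ coprimePoints D f ((M : ℝ) ^ 2)) :
    (f.eval z.1 z.2).natAbs ∈ {n ∈ Ioc 0 (M ^ 2) | D.Coprime n} := by
  obtain ⟨hle, hcop⟩ := hz
  have hcop' : D.Coprime (f.eval z.1 z.2).natAbs := (Int.isCoprime_iff_nat_coprime.1 hcop).symm
  rw [← natCast_natAbs_eval ha hdisc] at hle
  refine mem_filter.2 ⟨mem_Ioc.2 ⟨Nat.pos_of_ne_zero fun h0 ↦ hD ?_, by exact_mod_cast hle⟩, hcop'⟩
  rwa [h0, Nat.coprime_zero_right] at hcop'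

theorem sum_card_coprimePoints_le [Nontrivial (ZMod D)] (hχ : EqOneAtSplitPrimes χ)
    (hD : 0 < D) (h3 : D ≠ 3) (h4 : D ≠ 4) (hS : ∀ f ∈ S, f.IsReduced ∧ f.disc = -D) (M : ℕ) :
    ((∑ f ∈ S, Nat.card (coprimePoints D f ((M : ℝ) ^ 2)) : ℕ) : ℤ) ≤
      2 * ∑ n ∈ Ioc 0 (M ^ 2) with D.Coprime n, ∑ d ∈ n.divisors, χ d := by
  classical
  have hdisc {f} (hf : f ∈ S) : f.disc < 0 := by rw [(hS f hf).2]; lia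
  choose! W hW using fun f (hf : f ∈ S) ↦
    (finite_coprimePoints (hS f hf).1.a_pos (hdisc hf) ((M : ℝ) ^ 2) (D := D)).exists_finset_coe
  let U : Finset (BinaryQuadraticForm × ℤ × ℤ) :=
    (S.sigma W).map (Equiv.sigmaEquivProd _ _).toEmbedding
  have mem_U {u} (hu : u ∈ U) : u.1 ∈ S ∧ u.2 ∈ coprimePoints D u.1 ((M : ℝ) ^ 2) := by
    obtain ⟨⟨f, z⟩, hfz, rfl⟩ := mem_map.1 hu
    obtain ⟨hf, hz⟩ := mem_sigma.1 hfz
    exact ⟨hf, hW f hf ▸ mem_coe.2 hz⟩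
  have card_U : ∑ f ∈ S, Nat.card (coprimePoints D f ((M : ℝ) ^ 2)) = U.card := by
    rw [card_map, card_sigma]
    refine sum_congr rfl fun f hf ↦ ?_
    rw [← hW f hf, Nat.card_coe_set_eq, Set.ncard_coe_finset]
  have hmaps : ∀ u ∈ U, (u.1.eval u.2.1 u.2.2).natAbs ∈ {n ∈ Ioc 0 (M ^ 2) | D.Coprime n} :=
    fun u hu ↦ natAbs_eval_mem_Ioc_filter (hS _ (mem_U hu).1).1.a_pos (hdisc (mem_U hu).1)
      (fun h ↦ ZMod.nontrivial_iff.1 ‹_› h) (mem_U hu).2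
  rw [card_U, card_eq_sum_card_fiberwise hmaps, mul_sum, Nat.cast_sum]
  refine sum_le_sum fun n hn ↦ ?_
  obtain ⟨hn0, hnD⟩ := mem_filter.1 hn
  refine card_rep_le hχ h3 h4 (mem_Ioc.1 hn0).1.ne' hnD.symm fun u hu ↦ ?_
  obtain ⟨huU, rfl⟩ := mem_filter.1 hu
  obtain ⟨hred, hu⟩ := hS _ (mem_U huU).1
  exact ⟨hred, hu, (natCast_natAbs_eval hred.a_pos (hdisc (mem_U huU).1) _).symm⟩

theorem ne_one_of_odd (hχ : χ.Odd) : χ ≠ 1 := by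
  rintro rfl
  have h : (1 : DirichletCharacter ℤ D) (-1) = -1 := hχ
  rw [MulChar.one_apply isUnit_one.neg] at h
  lia

theorem card_mul_card_eval_le [NeZero D] [Nontrivial (ZMod D)] (hodd : χ.Odd)
    (hχ : EqOneAtSplitPrimes χ) (h3 : D ≠ 3) (h4 : D ≠ 4)
    (hS : ∀ f ∈ S, f.IsReduced ∧ f.disc = -D) :
    ∃ C : ℕ, ∀ k : ℕ, ∑ f ∈ S, (Nat.card {z : ℤ × ℤ | f.eval z.1 z.2 ≤ (k : ℝ) ^ 2} : ℝ) ≤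
      2 * (k + C) ^ 2 * (2 + Real.log D) + 4 * D / D.totient * (k + C) := by
  have hD := Nat.pos_of_neZero D
  choose! V hV hVcard using fun f (hf : f ∈ S) ↦ exists_isCoprimeSystem (NeZero.ne D)
    (fun d ↦ (hS f hf).1.isUnit_of_dvd) (hS f hf).2
  obtain ⟨C, hC⟩ := ((Finset.eventually_all S).2 fun f hf ↦
    (hV f hf).eventually_card_mul_card_le (NeZero.ne D) (hS f hf).1.a_pos (by
      rw [(hS f hf).2]; lia)).exists
  refine ⟨C, fun k ↦ ?_⟩
  have hlower : D * D.totient * ∑ f ∈ S, Nat.card {z : ℤ × ℤ | f.eval z.1 z.2 ≤ (k : ℝ) ^ 2} ≤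
      ∑ f ∈ S, Nat.card (coprimePoints D f ((D * (k + C) : ℕ) ^ 2)) := by
    rw [mul_sum]
    exact sum_le_sum fun f hf ↦ hVcard f hf ▸ hC f hf k
  have hupper := sum_card_coprimePoints_le hχ hD h3 h4 hS (D * (k + C))
  have hsum := sum_sum_divisors_dirichletCharacter_le (ne_one_of_odd hodd) (D * (k + C))
  have hφ : (0 : ℝ) < D.totient := Nat.cast_pos.2 (Nat.totient_pos.2 hD)
  have hDR : (0 : ℝ) < D := Nat.cast_pos.2 hD
  have hmul : D * D.totient * ∑ f ∈ S,
      (Nat.card {z : ℤ × ℤ | f.eval z.1 z.2 ≤ (k : ℝ) ^ 2} : ℝ) ≤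
      2 * (D.totient / D * (D * (k + C)) ^ 2 * (2 + Real.log D) + 2 * D * (D * (k + C))) := by
    calc _ ≤ ((∑ f ∈ S, Nat.card (coprimePoints D f ((D * (k + C) : ℕ) ^ 2)) : ℕ) : ℝ) := by
          exact_mod_cast hlower
      _ ≤ 2 * ((∑ n ∈ Ioc 0 ((D * (k + C)) ^ 2) with D.Coprime n, ∑ d ∈ n.divisors, χ d : ℤ) : ℝ) :=
          mod_cast hupper
      _ ≤ _ := by
          push_cast at hsum ⊢
          gcongr
  refine le_of_mul_le_mul_left (hmul.trans_eq ?_) (mul_pos hDR hφ)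
  field_simp
  ring

theorem card_le_of_forall_isReduced (hD : 0 < D) (hmod : D % 4 = 0 ∨ D % 4 = 3)
    (h3 : D ≠ 3) (h4 : D ≠ 4) (hS : ∀ f ∈ S, f.IsReduced ∧ f.disc = -D) :
    (S.card : ℝ) ≤ Real.pi⁻¹ * √D * (2 + Real.log D) := by
  have := NeZero.of_pos hD
  have : Nontrivial (ZMod D) := ZMod.nontrivial_iff.2 (by lia)
  obtain ⟨χ, hodd, hχ⟩ := exists_odd_character hmod hD
  obtain ⟨C, hC⟩ := card_mul_card_eval_le hodd hχ h3 h4 hS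
  have hleft : Tendsto (fun k : ℕ ↦
      ∑ f ∈ S, (Nat.card {z : ℤ × ℤ | f.eval z.1 z.2 ≤ (k : ℝ) ^ 2} : ℝ) / k ^ 2) atTop
      (𝓝 (S.card * (2 * Real.pi / √D))) := by
    rw [← nsmul_eq_mul, ← sum_const]
    refine tendsto_finsetSum _ fun f hf ↦ ?_
    have h := tendsto_card_eval_le_div (hS f hf).1.a_pos (by rw [(hS f hf).2]; lia)
    rw [(hS f hf).2, Int.cast_neg, neg_neg, Int.cast_natCast] at h
    exact h.comp ((tendsto_pow_atTop two_ne_zero).comp tendsto_natCast_atTop_atTop)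
  have hright : Tendsto (fun k : ℕ ↦ (2 * (k + C : ℝ) ^ 2 * (2 + Real.log D) +
      4 * D / D.totient * (k + C)) / k ^ 2) atTop (𝓝 (2 * (2 + Real.log D))) := by
    have hquot : Tendsto (fun k : ℕ ↦ (k + C : ℝ) / k) atTop (𝓝 1) := by
      simpa [add_comm] using tendsto_add_mul_div_add_mul_atTop_nhds (C : ℝ) 0 1 one_ne_zero
    have hinv := tendsto_inv_atTop_nhds_zero_nat (𝕜 := ℝ)
    convert ((hquot.pow 2).mul_const (2 * (2 + Real.log D))).add
      ((hquot.mul hinv).const_mul (4 * D / D.totient : ℝ)) using 2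
    · ring
    · ring
  have hle := le_of_tendsto_of_tendsto' hleft hright fun k ↦ by
    rw [← sum_div]
    gcongr
    exact hC k
  have hsqrt : 0 < √(D : ℝ) := Real.sqrt_pos.2 (Nat.cast_pos.2 hD)
  field_simp at hle ⊢
  linarith

theorem classNumber_eq_ncard (Δ : ℤ) :
    classNumber Δ = {f : BinaryQuadraticForm | f.IsReduced ∧ f.disc = Δ}.ncard := by
  rw [classNumber, ← Nat.card_coe_set_eq]
  exact Nat.card_congr
    { toFun f := ⟨⟨f.1.1, f.1.2.1, f.1.2.2⟩, ⟨f.2.1, f.2.2.1, f.2.2.2.2.1, f.2.2.2.2.2.1,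
        f.2.2.2.2.2.2⟩, f.2.2.2.1⟩
      invFun f := ⟨(f.1.a, f.1.b, f.1.c), f.2.1.a_pos, f.2.1.primitive, f.2.2, f.2.1.abs_b_le,
        f.2.1.a_le_c, f.2.1.b_nonneg⟩ }

end Counting

end BinaryQuadraticForm

/-- For a discriminant `Δ ≠ -3, -4`, `C(Δ) ≤ π⁻¹ |Δ|^{1/2} (2 + log |Δ|)`. -/
theorem stmt8 (Δ : ℤ) (hΔneg : Δ < 0) (hΔmod : Δ % 4 = 0 ∨ Δ % 4 = 1)
    (h3 : Δ ≠ -3) (h4 : Δ ≠ -4) :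
    (classNumber Δ : ℝ) ≤ Real.pi⁻¹ * Real.sqrt |(Δ : ℝ)| * (2 + Real.log |(Δ : ℝ)|) := by
  obtain ⟨D, rfl⟩ := Int.exists_eq_neg_ofNat hΔneg.le
  have hcard {S : Finset BinaryQuadraticForm} :=
    BinaryQuadraticForm.card_le_of_forall_isReduced (S := S) (D := D)
      (by lia) (by lia) (by lia) (by lia)
  rw [Int.cast_neg, abs_neg, Int.cast_natCast, Nat.abs_cast,
    BinaryQuadraticForm.classNumber_eq_ncard]
  rcases Set.finite_or_infinite {f : BinaryQuadraticForm | f.IsReduced ∧ f.disc = -D} with h | h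
  · rw [Set.ncard_eq_toFinset_card _ h]
    exact hcard fun f hf ↦ h.mem_toFinset.1 hf
  · rw [h.ncard]
    simpa using hcard (S := ∅)
end
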